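/- arXiv:2506.04187 — 2 statements merged into one kernel-verified Lean document; each statement's English description precedes it below -/
import Mathlib

section
/- Let γ=(γ_q)_{q≥1} be a sequence of real numbers and let ψ:ℕ→ℝ≥0 be decreasing. If there exist ε>0 and an integer k≥2 such that ∑_{q=1}^∞ ψ(q) / ( √(log q) · (log log q) · (log log log q) ⋯ (log^{(k)} q)^{1+ε} ) = ∞, where log^{(j)} denotes the j-fold iterate of log and only the innermost (k-fold iterated) logarithm carries the exponent 1+ε, then meas(W(ψ,γ)) = 1. -/
open MeasureTheory Filter

/-- Distance from a real number to the nearest integer. -/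
noncomputable def distNearestInt (x : ℝ) : ℝ := |x - round x|

/-- `log x = max {1, ln x}`. -/
noncomputable def log1 (x : ℝ) : ℝ := max 1 (Real.log x)

/-- `j`-fold iterate of `log1`. -/
noncomputable def iterlog : ℕ → ℝ → ℝ
  | 0, x => x
  | (j+1), x => log1 (iterlog j x)

/-- The set of `α ∈ [0,1]` with `‖qα - γ_q‖ < ψ q` for infinitely many `q ≥ 1`. -/
def WSet (ψ : ℕ → ℝ) (γ : ℕ → ℝ) : Set ℝ :=
  {α | α ∈ Set.Icc (0:ℝ) 1 ∧
    {q : ℕ | 1 ≤ q ∧ distNearestInt (q * α - γ q) < ψ q}.Infinite}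

/-
Weight the events `‖q α - γ_q‖ < ψ q` by `w q`, proportional to `1 / τ(q)` on each block
`4 ^ n ≤ q < 4 ^ (n + 1)`. Translating by `1 / r` shows that two events with indices `q ≤ r` are
independent up to an error of at most `gcd(q, r) / r` times the measure of the second. Since
`∑_{r ≤ X} gcd(q, r) ≤ τ(q) X`, the weights absorb these errors: the weighted count of events has
variance `O(M)`, where `M` is its mean, so by the Chebyshev inequality almost every `α` lies in
infinitely many events once `M` is unbounded. Counting the products `m * p` with `m ≤ √X` squarefree
and `p` a prime near `X / m` gives `∑ 1 / τ(q) ≫ X / √(log X)` on blocks near `X`, so by Cauchy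
condensation `M` is unbounded as soon as `∑ ψ q / √(log q)` diverges.
-/

section BorelCantelli

variable {Ω : Type*} [MeasurableSpace Ω] {μ : Measure Ω} [IsProbabilityMeasure μ]

lemma measureReal_iInter_compl_le_of_sum_inter_le {ι : Type*} {A : ι → Set Ω}
    (hA : ∀ q, MeasurableSet (A q)) (w : ι → ℝ) (s : Finset ι) {M E : ℝ} (hM : 0 < M)
    (hsum : ∑ q ∈ s, w q * μ.real (A q) = M)
    (hinter : ∑ q ∈ s, ∑ r ∈ s, w q * w r * μ.real (A q ∩ A r) ≤ M ^ 2 + E) :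
    μ.real (⋂ q ∈ s, (A q)ᶜ) ≤ E / M ^ 2 := by
  let X : Ω → ℝ := fun x ↦ ∑ q ∈ s, w q * (A q).indicator 1 x
  have hind (q : ι) : MemLp ((A q).indicator (1 : Ω → ℝ)) 2 μ :=
    memLp_indicator_const 2 (hA q) 1 (Or.inr (measure_ne_top μ _))
  have hX : MemLp X 2 μ := memLp_finsetSum s fun q _ ↦ (hind q).const_mul (w q)
  have hmean : ∫ x, X x ∂μ = M := by
    rw [← hsum, integral_finsetSum _ fun q _ ↦
      ((hind q).const_mul (w q)).integrable one_le_two]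
    simp_rw [integral_const_mul, integral_indicator_one (hA _)]
  have hsq : ∫ x, (X ^ 2) x ∂μ ≤ M ^ 2 + E := by
    have hmul (q r : ι) (x : Ω) : w q * (A q).indicator 1 x * (w r * (A r).indicator 1 x) =
        w q * w r * (A q ∩ A r).indicator 1 x := by
      rw [Set.inter_indicator_one, Pi.mul_apply]; ring
    refine le_of_eq_of_le ?_ hinter
    simp_rw [X, Pi.pow_apply, sq, Finset.sum_mul_sum, hmul]
    have hint (q r : ι) : Integrable (fun x ↦ w q * w r * (A q ∩ A r).indicator 1 x) μ :=
      (((integrable_const (1 : ℝ)).indicator ((hA q).inter (hA r))).const_mul _)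
    rw [integral_finsetSum _ fun q _ ↦ integrable_finsetSum _ fun r _ ↦ hint q r]
    simp_rw [integral_finsetSum s fun r _ ↦ hint _ r, integral_const_mul,
      integral_indicator_one ((hA _).inter (hA _))]
  have hsub : ⋂ q ∈ s, (A q)ᶜ ⊆ {x | M ≤ |X x - ∫ y, X y ∂μ|} := by
    intro x hx
    have hX0 : X x = 0 := Finset.sum_eq_zero fun q hq ↦ by
      simp [Set.indicator_of_notMem (Set.mem_iInter₂.mp hx q hq)]
    rw [Set.mem_ofPred_eq, hX0, hmean, zero_sub, abs_neg]
    exact le_abs_self M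
  have hvar : ProbabilityTheory.variance X μ ≤ E := by
    rw [ProbabilityTheory.variance_eq_sub hX, hmean]
    linarith
  calc μ.real (⋂ q ∈ s, (A q)ᶜ)
      ≤ ProbabilityTheory.variance X μ / M ^ 2 :=
        ENNReal.toReal_le_of_le_ofReal
          (div_nonneg (ProbabilityTheory.variance_nonneg X μ) (sq_nonneg M))
          ((measure_mono hsub).trans (ProbabilityTheory.meas_ge_le_variance_div_sq hX hM))
    _ ≤ E / M ^ 2 := by gcongr

theorem ae_frequently_mem_of_sum_inter_le {A : ℕ → Set Ω} (hA : ∀ q, MeasurableSet (A q))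
    (w : ℕ → ℝ) (K : ℝ)
    (h : ∀ (N : ℕ) (C : ℝ), ∃ s : Finset ℕ, (∀ q ∈ s, N ≤ q) ∧
      C ≤ ∑ q ∈ s, w q * μ.real (A q) ∧
      ∑ q ∈ s, ∑ r ∈ s, w q * w r * μ.real (A q ∩ A r) ≤
        (∑ q ∈ s, w q * μ.real (A q)) ^ 2 + K * ∑ q ∈ s, w q * μ.real (A q)) :
    ∀ᵐ x ∂μ, ∃ᶠ q in atTop, x ∈ A q := by
  have hnull (N : ℕ) : ∀ᵐ x ∂μ, ∃ q, N ≤ q ∧ x ∈ A q := by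
    have hle (ε : ℝ) (hε : 0 < ε) : μ.real {x | ¬ ∃ q, N ≤ q ∧ x ∈ A q} ≤ 0 + ε := by
      obtain ⟨s, hs, hC, hinter⟩ := h N (max 1 (K / ε))
      have hM : 0 < ∑ q ∈ s, w q * μ.real (A q) :=
        one_pos.trans_le ((le_max_left _ _).trans hC)
      have hsub : {x | ¬ ∃ q, N ≤ q ∧ x ∈ A q} ⊆ ⋂ q ∈ s, (A q)ᶜ := fun x hx ↦
        Set.mem_iInter₂.mpr fun q hq hxq ↦ hx ⟨q, hs q hq, hxq⟩
      calc μ.real {x | ¬ ∃ q, N ≤ q ∧ x ∈ A q}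
          ≤ μ.real (⋂ q ∈ s, (A q)ᶜ) := measureReal_mono hsub
        _ ≤ _ := measureReal_iInter_compl_le_of_sum_inter_le hA w s hM rfl hinter
        _ ≤ 0 + ε := by
          rw [sq, mul_div_mul_right _ _ hM.ne', zero_add, div_le_comm₀ hM hε]
          exact (le_max_right _ _).trans hC
    rw [ae_iff, ← measureReal_eq_zero_iff]
    exact le_antisymm (le_of_forall_pos_le_add hle) measureReal_nonneg
  filter_upwards [ae_all_iff.mpr hnull] with x hx
  exact frequently_atTop.mpr fun N ↦ hx N

end BorelCantelli

lemma nsmul_measureReal_inter_le {G : Type*} [AddGroup G] [MeasurableSpace G] [MeasurableAdd G]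
    {μ : Measure G} [IsFiniteMeasure μ] [μ.IsAddRightInvariant] {A B : Set G}
    (hA : MeasurableSet A) (hB : MeasurableSet B) {u : G} (hu : ∀ x, x + u ∈ B ↔ x ∈ B) {n : ℕ}
    {C : ℝ} (hC : ∀ x, ∑ k ∈ Finset.range n, A.indicator 1 (x + k • u) ≤ C) :
    n • μ.real (A ∩ B) ≤ C * μ.real B := by
  have hnsmul (k : ℕ) (x : G) : x + k • u ∈ B ↔ x ∈ B := by
    induction k with
    | zero => rw [zero_nsmul, add_zero]
    | succ k ih => rw [succ_nsmul, ← add_assoc, hu, ih]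
  have htranslate (k : ℕ) :
      ∫ x in B, A.indicator (1 : G → ℝ) (x + k • u) ∂μ = μ.real (A ∩ B) := by
    have hind (x : G) : B.indicator (fun x ↦ A.indicator (1 : G → ℝ) (x + k • u)) x =
        (A ∩ B).indicator 1 (x + k • u) := by
      rw [Set.inter_comm, ← Set.indicator_indicator]
      exact Set.indicator_eq_indicator (hnsmul k x).symm rfl
    rw [← integral_indicator hB, integral_congr_ae (.of_forall hind),
      integral_add_right_eq_self ((A ∩ B).indicator (1 : G → ℝ)),
      integral_indicator_one (hA.inter hB)]
  have hint (k : ℕ) : Integrable (fun x ↦ A.indicator (1 : G → ℝ) (x + k • u)) (μ.restrict B) :=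
    (integrable_const (1 : ℝ)).indicator (measurable_add_const (k • u) hA)
  calc n • μ.real (A ∩ B)
      = ∫ x in B, ∑ k ∈ Finset.range n, A.indicator (1 : G → ℝ) (x + k • u) ∂μ := by
        rw [integral_finsetSum _ fun k _ ↦ hint k]
        simp only [htranslate, Finset.sum_const, Finset.card_range]
    _ ≤ ∫ _ in B, C ∂μ :=
        integral_mono (integrable_finsetSum _ fun k _ ↦ hint k) (integrable_const C) hC
    _ = C * μ.real B := by rw [setIntegral_const, smul_eq_mul, mul_comm]

lemma measureReal_ball_unitAddCircle (c : UnitAddCircle) {ρ : ℝ} (hρ : 0 ≤ ρ) :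
    volume.real (Metric.ball c ρ) = min 1 (2 * ρ) := by
  rw [measureReal_congr (AddCircle.closedBall_ae_eq_ball.symm), Measure.real,
    AddCircle.volume_closedBall, ENNReal.toReal_ofReal (by positivity)]

lemma one_le_addOrderOf_mul_norm_sub {v : UnitAddCircle} {j k : ℕ} (hj : j < addOrderOf v)
    (hk : k < addOrderOf v) (hjk : j ≠ k) : 1 ≤ addOrderOf v * ‖k • v - j • v‖ := by
  have hv : IsOfFinAddOrder v := addOrderOf_pos_iff.mp (j.zero_le.trans_lt hj)
  have hne : k • v - j • v ≠ 0 := fun h ↦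
    hjk (nsmul_injOn_Iio_addOrderOf hj hk (sub_eq_zero.mp h).symm)
  have hdvd : addOrderOf (k • v - j • v) ∣ addOrderOf v := by
    apply addOrderOf_dvd_of_nsmul_eq_zero
    rw [nsmul_sub, nsmul_left_comm, nsmul_left_comm _ j, addOrderOf_nsmul_eq_zero, nsmul_zero,
      nsmul_zero, sub_zero]
  have hfin : IsOfFinAddOrder (k • v - j • v) :=
    addOrderOf_pos_iff.mp (Nat.pos_of_dvd_of_pos hdvd hv.addOrderOf_pos)
  calc (1 : ℝ) ≤ addOrderOf (k • v - j • v) • ‖k • v - j • v‖ :=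
        AddCircle.le_add_order_smul_norm_of_isOfFinAddOrder hfin hne
    _ ≤ addOrderOf v * ‖k • v - j • v‖ := by
        rw [nsmul_eq_mul]
        gcongr
        exact Nat.le_of_dvd hv.addOrderOf_pos hdvd

open scoped Finset in
lemma card_le_of_nsmul_mem_ball {v x c : UnitAddCircle} {ρ : ℝ} (hρ : 0 ≤ ρ) {S : Finset ℕ}
    (hlt : ∀ k ∈ S, k < addOrderOf v) (hball : ∀ k ∈ S, x + k • v ∈ Metric.ball c ρ) :
    #S ≤ addOrderOf v * (2 * ρ) + 1 := by
  set n := addOrderOf v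
  rcases n.eq_zero_or_pos with h0 | hpos
  · have hempty : S = ∅ := Finset.eq_empty_of_forall_notMem fun k hk ↦ by
      simpa only [h0, not_lt_zero] using hlt k hk
    simp [hempty, h0]
  have hn0 : (0 : ℝ) < n := Nat.cast_pos.mpr hpos
  let δ : ℝ := 1 / (2 * n)
  have hδ : 0 ≤ δ := by positivity
  have hδn : 2 * δ = 1 / n := by simp only [δ]; field_simp
  have hvol (y : UnitAddCircle) : volume.real (Metric.ball y δ) = 1 / n := by
    rw [measureReal_ball_unitAddCircle y hδ, hδn, min_eq_right]
    exact div_le_one_of_le₀ (Nat.one_le_cast.mpr hpos) hn0.le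
  have hdisj : (S : Set ℕ).PairwiseDisjoint fun k ↦ Metric.ball (x + k • v) δ := by
    intro j hj k hk hjk
    apply Metric.ball_disjoint_ball
    rw [← two_mul, hδn, dist_eq_norm, add_sub_add_left_eq_sub, div_le_iff₀' hn0]
    exact one_le_addOrderOf_mul_norm_sub (hlt k hk) (hlt j hj) hjk.symm
  have hsub : ⋃ k ∈ S, Metric.ball (x + k • v) δ ⊆ Metric.ball c (ρ + δ) := by
    refine Set.iUnion₂_subset fun k hk ↦ Metric.ball_subset_ball' ?_
    rw [add_comm]
    gcongr
    exact (Metric.mem_ball.mp (hball k hk)).le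
  have hpack : #S * (1 / n : ℝ) ≤ 2 * ρ + 1 / n :=
    calc #S * (1 / n : ℝ) = volume.real (⋃ k ∈ S, Metric.ball (x + k • v) δ) := by
          rw [measureReal_biUnion_finset hdisj fun _ _ ↦ Metric.isOpen_ball.measurableSet]
          simp only [hvol, Finset.sum_const, nsmul_eq_mul]
      _ ≤ volume.real (Metric.ball c (ρ + δ)) := measureReal_mono hsub
      _ ≤ 2 * (ρ + δ) := by
          rw [measureReal_ball_unitAddCircle c (by positivity)]
          exact min_le_right _ _
      _ = 2 * ρ + 1 / n := by rw [mul_add, hδn]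
  calc (#S : ℝ) = n * (#S * (1 / n : ℝ)) := by field_simp
    _ ≤ n * (2 * ρ + 1 / n) := by gcongr
    _ = n * (2 * ρ) + 1 := by field_simp

/-- The points of the circle whose `q`-th multiple lies within `ρ` of `c`: the event
`‖q α - γ_q‖ < ψ q` of inhomogeneous approximation, with `c = γ_q` and `ρ = ψ q`. -/
def approxSet (c : UnitAddCircle) (ρ : ℝ) (q : ℕ) : Set UnitAddCircle :=
  (q • ·) ⁻¹' Metric.ball c ρ

lemma measurableSet_approxSet (c : UnitAddCircle) (ρ : ℝ) (q : ℕ) :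
    MeasurableSet (approxSet c ρ q) :=
  measurable_const_smul q Metric.isOpen_ball.measurableSet

lemma measureReal_approxSet (c : UnitAddCircle) {ρ : ℝ} (hρ : 0 ≤ ρ) (hρ' : ρ ≤ 1 / 2) {q : ℕ}
    (hq : q ≠ 0) : volume.real (approxSet c ρ q) = 2 * ρ := by
  have hpres : MeasurePreserving fun x : UnitAddCircle ↦ q • x := by
    simpa only [natCast_zsmul] using
      Measure.measurePreserving_zsmul (volume : Measure UnitAddCircle) (Nat.cast_ne_zero.mpr hq)
  rw [approxSet, hpres.measureReal_preimage Metric.isOpen_ball.measurableSet.nullMeasurableSet,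
    measureReal_ball_unitAddCircle c hρ, min_eq_right (by linarith)]

-- Translation by `1 / r` preserves the second set and rotates the `q`-th multiples by an element
-- of order `r / gcd r q`, whose orbit meets a ball of radius `ρ` in proportion about `2 * ρ`.
lemma measureReal_approxSet_inter_le (c c' : UnitAddCircle) {ρ : ℝ} (ρ' : ℝ) (hρ : 0 ≤ ρ)
    (q : ℕ) {r : ℕ} (hr : r ≠ 0) :
    volume.real (approxSet c ρ q ∩ approxSet c' ρ' r) ≤
      (2 * ρ + r.gcd q / r) * volume.real (approxSet c' ρ' r) := by
  classical
  let u : UnitAddCircle := ((1 / r : ℝ) : UnitAddCircle)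
  have hu : addOrderOf u = r := AddCircle.addOrderOf_period_div (Nat.pos_of_ne_zero hr)
  have hufin : IsOfFinAddOrder u := addOrderOf_pos_iff.mp (hu ▸ Nat.pos_of_ne_zero hr)
  set n := addOrderOf (q • u)
  have hn : n * r.gcd q = r := by
    rw [show n = _ from hufin.addOrderOf_nsmul u q, hu, Nat.div_mul_cancel (Nat.gcd_dvd_left r q)]
  have hinv (x : UnitAddCircle) : x + u ∈ approxSet c' ρ' r ↔ x ∈ approxSet c' ρ' r := by
    have hru : r • u = 0 := by rw [← hu, addOrderOf_nsmul_eq_zero]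
    simp only [approxSet, Set.mem_preimage, nsmul_add, hru, add_zero]
  have hcount (x : UnitAddCircle) :
      ∑ k ∈ Finset.range n, (approxSet c ρ q).indicator (1 : UnitAddCircle → ℝ) (x + k • u) ≤
        n * (2 * ρ) + 1 := by
    simp only [Set.indicator_apply, Pi.one_apply, Finset.sum_boole]
    refine card_le_of_nsmul_mem_ball (v := q • u) (x := q • x) (c := c) hρ
      (fun k hk ↦ Finset.mem_range.mp (Finset.mem_filter.mp hk).1) fun k hk ↦ ?_
    rw [nsmul_left_comm, ← nsmul_add]
    exact (Finset.mem_filter.mp hk).2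
  have havg := nsmul_measureReal_inter_le (μ := volume) (measurableSet_approxSet c ρ q)
    (measurableSet_approxSet c' ρ' r) hinv hcount
  have hr0 : (r : ℝ) ≠ 0 := Nat.cast_ne_zero.mpr hr
  have hn' : (n : ℝ) * r.gcd q = r := mod_cast hn
  have hn0 : (0 : ℝ) < n :=
    lt_of_le_of_ne n.cast_nonneg (left_ne_zero_of_mul (hn'.trans_ne hr0)).symm
  have hgcd : (r.gcd q : ℝ) / r = 1 / n := by
    rw [div_eq_div_iff hr0 hn0.ne', one_mul, mul_comm, hn']
  rw [nsmul_eq_mul] at havg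
  calc volume.real (approxSet c ρ q ∩ approxSet c' ρ' r)
      ≤ (n * (2 * ρ) + 1) * volume.real (approxSet c' ρ' r) / n := (le_div_iff₀' hn0).mpr havg
    _ = (2 * ρ + r.gcd q / r) * volume.real (approxSet c' ρ' r) := by rw [hgcd]; field_simp

section DivisorSums

open scoped Finset

lemma sum_gcd_le {q : ℕ} (hq : q ≠ 0) (X : ℕ) :
    ∑ r ∈ Finset.Ioc 0 X, (q.gcd r : ℝ) ≤ #q.divisors * X := by
  have hgcd (r : ℕ) : (q.gcd r : ℝ) ≤ ∑ d ∈ q.divisors, if d ∣ r then (d : ℝ) else 0 := by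
    have hmem : q.gcd r ∈ q.divisors := Nat.mem_divisors.mpr ⟨q.gcd_dvd_left r, hq⟩
    simpa only [Nat.gcd_dvd_right, if_true] using
      Finset.single_le_sum (f := fun d : ℕ ↦ if d ∣ r then (d : ℝ) else 0)
        (fun d _ ↦ by positivity) hmem
  have hmultiples (d : ℕ) : ∑ r ∈ Finset.Ioc 0 X, (if d ∣ r then (d : ℝ) else 0) ≤ X := by
    rw [← Finset.sum_filter, Finset.sum_const, Nat.Ioc_filter_dvd_card_eq_div, nsmul_eq_mul]
    exact_mod_cast Nat.div_mul_le_self X d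
  calc ∑ r ∈ Finset.Ioc 0 X, (q.gcd r : ℝ)
      ≤ ∑ r ∈ Finset.Ioc 0 X, ∑ d ∈ q.divisors, if d ∣ r then (d : ℝ) else 0 :=
        Finset.sum_le_sum fun r _ ↦ hgcd r
    _ = ∑ d ∈ q.divisors, ∑ r ∈ Finset.Ioc 0 X, if d ∣ r then (d : ℝ) else 0 := Finset.sum_comm
    _ ≤ #q.divisors • (X : ℝ) := Finset.sum_le_card_nsmul _ _ _ fun d _ ↦ hmultiples d
    _ = #q.divisors * X := nsmul_eq_mul _ _

lemma sum_mul_inv_card_divisors_mul_gcd_le {X : ℕ} {w : ℕ → ℝ} {S T : Finset ℕ}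
    (hS : ∀ q ∈ S, q ≠ 0) (hT : T ⊆ Finset.Ioc 0 X) (hw : ∀ q ∈ S, 0 ≤ w q) :
    ∑ q ∈ S, ∑ r ∈ T, w q * (#q.divisors : ℝ)⁻¹ * q.gcd r ≤ X * ∑ q ∈ S, w q := by
  rw [Finset.mul_sum]
  refine Finset.sum_le_sum fun q hq ↦ ?_
  have hcard : (#q.divisors : ℝ) ≠ 0 := by simpa using hS q hq
  calc ∑ r ∈ T, w q * (#q.divisors : ℝ)⁻¹ * q.gcd r
      = w q * (#q.divisors : ℝ)⁻¹ * ∑ r ∈ T, (q.gcd r : ℝ) := (Finset.mul_sum ..).symm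
    _ ≤ w q * (#q.divisors : ℝ)⁻¹ * ∑ r ∈ Finset.Ioc 0 X, (q.gcd r : ℝ) := by
        have hwq := hw q hq
        gcongr
    _ ≤ w q * (#q.divisors : ℝ)⁻¹ * (#q.divisors * X) := by
        have hwq := hw q hq
        gcongr
        exact sum_gcd_le (hS q hq) X
    _ = X * w q := by field_simp

-- With `w ≤ 1 / τ`, the product `w q * w r` is at most `w r / τ r` or `w q / τ q`, according to
-- which of `τ q`, `τ r` is larger; this decouples the two variables in `gcd q r`.
lemma sum_mul_mul_gcd_le {X : ℕ} {w : ℕ → ℝ} {S T : Finset ℕ} (hS : S ⊆ Finset.Ioc 0 X)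
    (hT : T ⊆ Finset.Ioc 0 X) (hw : ∀ q, 0 ≤ w q) (hwS : ∀ q ∈ S, w q ≤ (#q.divisors : ℝ)⁻¹)
    (hwT : ∀ q ∈ T, w q ≤ (#q.divisors : ℝ)⁻¹) :
    ∑ q ∈ S, ∑ r ∈ T, w q * w r * q.gcd r ≤ X * (∑ q ∈ S, w q + ∑ r ∈ T, w r) := by
  have hne {U : Finset ℕ} (hU : U ⊆ Finset.Ioc 0 X) (q : ℕ) (hq : q ∈ U) : q ≠ 0 :=
    (Finset.mem_Ioc.mp (hU hq)).1.ne'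
  have hsplit (q : ℕ) (hq : q ∈ S) (r : ℕ) (hr : r ∈ T) : w q * w r * q.gcd r ≤
      w q * (#q.divisors : ℝ)⁻¹ * q.gcd r + w r * (#r.divisors : ℝ)⁻¹ * r.gcd q := by
    rw [r.gcd_comm, ← add_mul]
    gcongr
    have hwq := hw q
    have hwr := hw r
    rcases le_total #q.divisors #r.divisors with h | h
    · have hqr : w r ≤ (#q.divisors : ℝ)⁻¹ := (hwT r hr).trans <| by
        have : (#q.divisors : ℝ) ≠ 0 := by simpa using hne hS q hq
        gcongr
      calc w q * w r ≤ w q * (#q.divisors : ℝ)⁻¹ := by gcongr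
        _ ≤ _ := le_add_of_nonneg_right (by positivity)
    · have hrq : w q ≤ (#r.divisors : ℝ)⁻¹ := (hwS q hq).trans <| by
        have : (#r.divisors : ℝ) ≠ 0 := by simpa using hne hT r hr
        gcongr
      calc w q * w r ≤ (#r.divisors : ℝ)⁻¹ * w r := by gcongr
        _ = w r * (#r.divisors : ℝ)⁻¹ := mul_comm _ _
        _ ≤ _ := le_add_of_nonneg_left (by positivity)
  calc ∑ q ∈ S, ∑ r ∈ T, w q * w r * q.gcd r
      ≤ ∑ q ∈ S, ∑ r ∈ T, (w q * (#q.divisors : ℝ)⁻¹ * q.gcd r +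
          w r * (#r.divisors : ℝ)⁻¹ * r.gcd q) :=
        Finset.sum_le_sum fun q hq ↦ Finset.sum_le_sum fun r hr ↦ hsplit q hq r hr
    _ = ∑ q ∈ S, ∑ r ∈ T, w q * (#q.divisors : ℝ)⁻¹ * q.gcd r +
          ∑ r ∈ T, ∑ q ∈ S, w r * (#r.divisors : ℝ)⁻¹ * r.gcd q := by
        simp only [Finset.sum_add_distrib]
        rw [Finset.sum_comm (s := T)]
    _ ≤ X * ∑ q ∈ S, w q + X * ∑ r ∈ T, w r :=
        add_le_add (sum_mul_inv_card_divisors_mul_gcd_le (hne hS) hT fun q _ ↦ hw q)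
          (sum_mul_inv_card_divisors_mul_gcd_le (hne hT) hS fun r _ ↦ hw r)
    _ = X * (∑ q ∈ S, w q + ∑ r ∈ T, w r) := (mul_add ..).symm

lemma sum_le_sum_of_injOn {ι κ : Type*} {s : Finset ι} {t : Finset κ} {f : ι → ℝ} {g : κ → ℝ}
    {e : ι → κ} (he : Set.InjOn e s) (hmaps : ∀ i ∈ s, e i ∈ t) (hg : ∀ j ∈ t, 0 ≤ g j)
    (hfg : ∀ i ∈ s, f i ≤ g (e i)) : ∑ i ∈ s, f i ≤ ∑ j ∈ t, g j := by
  classical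
  calc ∑ i ∈ s, f i ≤ ∑ i ∈ s, g (e i) := Finset.sum_le_sum hfg
    _ = ∑ j ∈ s.image e, g j := (Finset.sum_image he).symm
    _ ≤ ∑ j ∈ t, g j := Finset.sum_le_sum_of_subset_of_nonneg
        (Finset.image_subset_iff.mpr hmaps) fun j hj _ ↦ hg j hj

/-- The squarefree positive integers up to `Y`, the small factors `m` of the integers `m * p` used
to bound the sum of `1 / τ` from below. -/
def squarefreeUpTo (Y : ℕ) : Finset ℕ := {m ∈ Finset.Icc 1 Y | Squarefree m}

lemma mem_squarefreeUpTo {Y m : ℕ} : m ∈ squarefreeUpTo Y ↔ (0 < m ∧ m ≤ Y) ∧ Squarefree m := by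
  rw [squarefreeUpTo, Finset.mem_filter, Finset.mem_Icc, Nat.succ_le_iff]

-- Every `n ≤ Y` is `b ^ 2 * m` with `m` squarefree, and `∑ 1 / b ^ 2 ≤ 2`.
lemma log_le_two_mul_sum_squarefreeUpTo (Y : ℕ) :
    Real.log Y ≤ 2 * ∑ m ∈ squarefreeUpTo Y, (m : ℝ)⁻¹ := by
  have hlog : Real.log Y ≤ ∑ n ∈ Finset.Icc 1 Y, (n : ℝ)⁻¹ := by
    rcases Y.eq_zero_or_pos with rfl | hY
    · simp
    calc Real.log Y ≤ Real.log ↑(Y + 1) := by gcongr; exact Y.le_succ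
      _ ≤ harmonic Y := log_add_one_le_harmonic Y
      _ = _ := by rw [harmonic_eq_sum_Icc]; push_cast; rfl
  choose a b hab ha using fun n ↦ Nat.sq_mul_squarefree n
  have hprod : ∑ n ∈ Finset.Icc 1 Y, (n : ℝ)⁻¹ ≤
      ∑ x ∈ squarefreeUpTo Y ×ˢ Finset.Ioo 0 (Y + 1), (x.1 : ℝ)⁻¹ * ((x.2 : ℝ) ^ 2)⁻¹ := by
    refine sum_le_sum_of_injOn (e := fun n ↦ (a n, b n)) ?_ (fun n hn ↦ ?_)
      (fun x _ ↦ by positivity) fun n _ ↦ ?_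
    · intro n _ n' _ h
      rw [← hab n, ← hab n', (Prod.mk.inj h).1, (Prod.mk.inj h).2]
    · have hn := Finset.mem_Icc.mp hn
      have hpos : 0 < b n ^ 2 * a n := (hab n).symm ▸ hn.1
      have ha0 : 0 < a n := pos_of_mul_pos_right hpos (Nat.zero_le _)
      have hb0 : 0 < b n := Nat.pos_of_ne_zero fun h ↦ by simp [h] at hpos
      have han : a n ≤ n := Nat.le_of_dvd hn.1 ⟨b n ^ 2, by rw [mul_comm, hab]⟩
      have hbn : b n ≤ n := Nat.le_of_dvd hn.1 ⟨b n * a n, by rw [← mul_assoc, ← sq, hab]⟩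
      rw [Finset.mem_product, mem_squarefreeUpTo, Finset.mem_Ioo]
      exact ⟨⟨⟨ha0, han.trans hn.2⟩, ha n⟩, hb0, Nat.lt_succ_of_le (hbn.trans hn.2)⟩
    · rw [← mul_inv, ← Nat.cast_pow, ← Nat.cast_mul, mul_comm, hab]
  calc Real.log Y ≤ _ := hlog.trans hprod
    _ = (∑ m ∈ squarefreeUpTo Y, (m : ℝ)⁻¹) * ∑ b ∈ Finset.Ioo 0 (Y + 1), ((b : ℝ) ^ 2)⁻¹ := by
      rw [Finset.sum_mul_sum, Finset.sum_product]
    _ ≤ (∑ m ∈ squarefreeUpTo Y, (m : ℝ)⁻¹) * 2 := by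
      gcongr
      simpa using sum_Ioo_inv_sq_le (α := ℝ) 0 (Y + 1)
    _ = _ := mul_comm _ _

-- All `τ N` factorizations `N = m * n` are coprime, so each term equals `1 / (N * τ N)`.
lemma inv_eq_sum_divisorsAntidiagonal_of_squarefree {N : ℕ} (hN : Squarefree N) :
    (N : ℝ)⁻¹ = ∑ x ∈ N.divisorsAntidiagonal,
      (x.1 * #x.1.divisors : ℝ)⁻¹ * (x.2 * #x.2.divisors : ℝ)⁻¹ := by
  have hterm (x : ℕ × ℕ) (hx : x ∈ N.divisorsAntidiagonal) :
      (x.1 * #x.1.divisors : ℝ)⁻¹ * (x.2 * #x.2.divisors : ℝ)⁻¹ = (N * #N.divisors : ℝ)⁻¹ := by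
    obtain ⟨rfl, -⟩ := Nat.mem_divisorsAntidiagonal.mp hx
    rw [(Nat.coprime_of_squarefree_mul hN).card_divisors_mul, ← mul_inv]
    push_cast
    ring
  have hcard : (#N.divisors : ℝ) ≠ 0 := by simpa using hN.ne_zero
  rw [Finset.sum_congr rfl hterm, Finset.sum_const, ← Nat.map_div_right_divisors,
    Finset.card_map, nsmul_eq_mul, mul_inv, mul_left_comm, mul_inv_cancel₀ hcard, mul_one]

lemma sum_squarefreeUpTo_le_sq (Y : ℕ) :
    ∑ N ∈ squarefreeUpTo Y, (N : ℝ)⁻¹ ≤ (∑ m ∈ squarefreeUpTo Y, (m * #m.divisors : ℝ)⁻¹) ^ 2 := by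
  let f : ℕ → ℝ := fun m ↦ (m * #m.divisors : ℝ)⁻¹
  have hfiber (N : ℕ) (hN : N ∈ squarefreeUpTo Y) : N.divisorsAntidiagonal ⊆
      {x ∈ squarefreeUpTo Y ×ˢ squarefreeUpTo Y | x.1 * x.2 = N} := by
    intro x hx
    obtain ⟨⟨hN0, hNY⟩, hsq⟩ := mem_squarefreeUpTo.mp hN
    have hdvd {d : ℕ} (hd : d ∣ N) : d ∈ squarefreeUpTo Y := mem_squarefreeUpTo.mpr
      ⟨⟨Nat.pos_of_dvd_of_pos hd hN0, (Nat.le_of_dvd hN0 hd).trans hNY⟩, hsq.squarefree_of_dvd hd⟩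
    have hmul := (Nat.mem_divisorsAntidiagonal.mp hx).1
    simp only [Finset.mem_filter, Finset.mem_product]
    exact ⟨⟨hdvd (Dvd.intro _ hmul), hdvd (Dvd.intro_left _ hmul)⟩, hmul⟩
  calc ∑ N ∈ squarefreeUpTo Y, (N : ℝ)⁻¹
      ≤ ∑ N ∈ squarefreeUpTo Y, ∑ x ∈ squarefreeUpTo Y ×ˢ squarefreeUpTo Y with x.1 * x.2 = N,
          f x.1 * f x.2 := Finset.sum_le_sum fun N hN ↦
        (inv_eq_sum_divisorsAntidiagonal_of_squarefree (mem_squarefreeUpTo.mp hN).2).trans_le <|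
        Finset.sum_le_sum_of_subset_of_nonneg (hfiber N hN) fun _ _ _ ↦ by positivity
    _ ≤ ∑ x ∈ squarefreeUpTo Y ×ˢ squarefreeUpTo Y, f x.1 * f x.2 :=
        Finset.sum_fiberwise_le_sum_of_sum_fiber_nonneg fun _ _ ↦
          Finset.sum_nonneg fun _ _ ↦ by positivity
    _ = (∑ m ∈ squarefreeUpTo Y, f m) ^ 2 := by rw [sq, Finset.sum_mul_sum, Finset.sum_product]

lemma eventually_quarter_mul_le_theta_sub :
    ∀ᶠ y : ℝ in atTop, 1 / 4 * y ≤ Chebyshev.theta (3 * y) - Chebyshev.theta y := by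
  have hlog : ∀ᶠ x : ℝ in atTop, Real.log x ≤ 1 / 100 * √x := by
    filter_upwards [(isLittleO_log_rpow_atTop (r := 1 / 2) (by norm_num)).bound
      (c := 1 / 100) (by norm_num), eventually_ge_atTop 1] with x hx hx1
    rwa [Real.norm_of_nonneg (Real.log_nonneg hx1), Real.norm_of_nonneg (by positivity),
      ← Real.sqrt_eq_rpow] at hx
  have htriple : Tendsto (fun y : ℝ ↦ 3 * y) atTop atTop :=
    tendsto_id.const_mul_atTop (by norm_num)
  filter_upwards [htriple.eventually hlog, eventually_ge_atTop 50] with y hl hy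
  have hsq : √(3 * y) * √(3 * y) = 3 * y := Real.mul_self_sqrt (by linarith)
  have hsqrt_one : 1 ≤ √(3 * y) := Real.one_le_sqrt.mpr (by linarith)
  have hsqrt_log : √(3 * y) * Real.log (3 * y) ≤ 3 * y / 100 := by nlinarith
  have hlog_add : Real.log (3 * y + 2) ≤ 3 * y / 50 := by
    calc Real.log (3 * y + 2) ≤ Real.log ((3 * y) ^ 2) := by gcongr; nlinarith
      _ = 2 * Real.log (3 * y) := by rw [Real.log_pow]; norm_num
      _ ≤ 3 * y / 50 := by nlinarith
  have hlower := Chebyshev.theta_ge' (x := 3 * y) (by linarith)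
  have hupper := Chebyshev.theta_le_log4_mul_x (x := y) (by linarith)
  have hlog4 : Real.log 4 = 2 * Real.log 2 := by
    rw [show (4 : ℝ) = 2 ^ 2 by norm_num, Real.log_pow]; norm_num
  rw [hlog4] at hupper
  nlinarith [Real.log_two_gt_d9, Real.log_two_lt_d9]

/-- The primes in `(y, 3 * y]`, the large factors `p` of the integers `m * p` used to bound the sum
of `1 / τ` from below. -/
noncomputable def primesAbove (y : ℝ) : Finset ℕ := {p ∈ Finset.Ioc ⌊y⌋₊ ⌊3 * y⌋₊ | p.Prime}

lemma mem_primesAbove {y : ℝ} (hy : 0 ≤ y) {p : ℕ} :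
    p ∈ primesAbove y ↔ (y < p ∧ p ≤ 3 * y) ∧ p.Prime := by
  rw [primesAbove, Finset.mem_filter, Finset.mem_Ioc, Nat.floor_lt hy,
    Nat.le_floor_iff (by positivity)]

lemma eventually_quarter_mul_le_sum_log_primesAbove :
    ∀ᶠ y : ℝ in atTop, 1 / 4 * y ≤ ∑ p ∈ primesAbove y, Real.log p := by
  filter_upwards [eventually_quarter_mul_le_theta_sub, eventually_ge_atTop 0] with y hy hy0
  refine hy.trans_eq ?_
  have hfloor : ⌊y⌋₊ ≤ ⌊3 * y⌋₊ := Nat.floor_mono (by linarith)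
  simp only [Chebyshev.theta, primesAbove, Finset.sum_filter]
  rw [← Finset.sum_Ioc_consecutive _ (Nat.zero_le _) hfloor, add_sub_cancel_left]

lemma sqrt_lt_of_mem_primesAbove_div {X m p : ℕ} (hm : m ∈ squarefreeUpTo X.sqrt)
    (hp : p ∈ primesAbove (X / m)) : X.sqrt < p := by
  obtain ⟨⟨hm0, hmX⟩, -⟩ := mem_squarefreeUpTo.mp hm
  obtain ⟨⟨hlt, -⟩, -⟩ := (mem_primesAbove (by positivity)).mp hp
  have hXp : X < p * m := by
    rw [div_lt_iff₀ (by positivity)] at hlt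
    exact_mod_cast hlt
  exact lt_of_mul_lt_mul_right (X.sqrt_le.trans_lt (hXp.trans_le (Nat.mul_le_mul_left p hmX)))
    (Nat.zero_le _)

lemma sum_inv_card_divisors_mul_le (X : ℕ) :
    ∑ m ∈ squarefreeUpTo X.sqrt, ∑ p ∈ primesAbove (X / m), (#(m * p).divisors : ℝ)⁻¹ ≤
      ∑ q ∈ Finset.Ico X (4 * X), (#q.divisors : ℝ)⁻¹ := by
  rw [Finset.sum_sigma']
  refine sum_le_sum_of_injOn (e := fun x ↦ x.1 * x.2) ?_ ?_ (fun _ _ ↦ by positivity)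
    fun _ _ ↦ le_rfl
  · rintro ⟨m, p⟩ hx ⟨m', p'⟩ hx' (heq : m * p = m' * p')
    obtain ⟨hm, hp⟩ := Finset.mem_sigma.mp hx
    obtain ⟨hm', hp'⟩ := Finset.mem_sigma.mp hx'
    have hprime : p.Prime := ((mem_primesAbove (by positivity)).mp hp).2
    have hprime' : p'.Prime := ((mem_primesAbove (by positivity)).mp hp').2
    have hm'p : ¬ p ∣ m' := Nat.not_dvd_of_pos_of_lt (mem_squarefreeUpTo.mp hm').1.1
      ((mem_squarefreeUpTo.mp hm').1.2.trans_lt (sqrt_lt_of_mem_primesAbove_div hm hp))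
    obtain rfl : p = p' := (Nat.prime_dvd_prime_iff_eq hprime hprime').mp
      ((hprime.dvd_mul.mp (heq ▸ dvd_mul_left p m)).resolve_left hm'p)
    rw [Nat.eq_of_mul_eq_mul_right hprime.pos heq]
  · rintro ⟨m, p⟩ hx
    obtain ⟨hm, hp⟩ := Finset.mem_sigma.mp hx
    obtain ⟨⟨hm0, -⟩, -⟩ := mem_squarefreeUpTo.mp hm
    obtain ⟨⟨hlt, hle⟩, -⟩ := (mem_primesAbove (by positivity)).mp hp
    have hm0' : (0 : ℝ) < m := Nat.cast_pos.mpr hm0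
    have hXm : (m : ℝ) * (X / m) = X := by field_simp
    have hX : X < m * p := by
      have : (X : ℝ) < m * p := hXm ▸ mul_lt_mul_of_pos_left hlt hm0'
      exact_mod_cast this
    have h3X : m * p ≤ 3 * X := by
      have : (m : ℝ) * p ≤ 3 * X := by
        calc (m : ℝ) * p ≤ m * (3 * (X / m)) := by gcongr
          _ = 3 * X := by rw [mul_left_comm, hXm]
      exact_mod_cast this
    rw [Finset.mem_Ico]
    lia

lemma sum_inv_card_divisors_primesAbove_ge {X m : ℕ} (hX : 3 ≤ X)
    (hm : m ∈ squarefreeUpTo X.sqrt)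
    (hprimes : 1 / 4 * (X / m : ℝ) ≤ ∑ p ∈ primesAbove (X / m), Real.log p) :
    X / (16 * Real.log X) * (m * #m.divisors : ℝ)⁻¹ ≤
      ∑ p ∈ primesAbove (X / m), (#(m * p).divisors : ℝ)⁻¹ := by
  obtain ⟨⟨hm0, hmX⟩, -⟩ := mem_squarefreeUpTo.mp hm
  have hlogX : 0 < Real.log X := Real.log_pos (by exact_mod_cast (by lia : 1 < X))
  have hcard : (#m.divisors : ℝ) ≠ 0 := by simpa using hm0.ne'
  have hterm (p : ℕ) (hp : p ∈ primesAbove (X / m)) :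
      Real.log p * (4 * Real.log X * #m.divisors)⁻¹ ≤ (#(m * p).divisors : ℝ)⁻¹ := by
    obtain ⟨⟨-, hle⟩, hprime⟩ := (mem_primesAbove (by positivity)).mp hp
    have hmp : m.Coprime p := (Nat.coprime_of_lt_prime hm0.ne'
      (hmX.trans_lt (sqrt_lt_of_mem_primesAbove_div hm hp)) hprime).symm
    have hlogp : Real.log p ≤ 2 * Real.log X := by
      have hpX : (p : ℝ) ≤ X ^ 2 := calc
        (p : ℝ) ≤ 3 * (X / m) := hle
        _ ≤ X * (X / 1) := by
          gcongr
          · exact_mod_cast hX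
          · exact_mod_cast hm0
        _ = X ^ 2 := by rw [div_one, sq]
      calc Real.log p ≤ Real.log ((X : ℝ) ^ 2) :=
            Real.log_le_log (Nat.cast_pos.mpr hprime.pos) hpX
        _ = 2 * Real.log X := by rw [Real.log_pow, Nat.cast_ofNat]
    calc Real.log p * (4 * Real.log X * #m.divisors)⁻¹
        ≤ 2 * Real.log X * (4 * Real.log X * #m.divisors)⁻¹ := by gcongr
      _ = (#m.divisors * (2 : ℕ) : ℝ)⁻¹ := by push_cast; field_simp; norm_num
      _ = (#(m * p).divisors : ℝ)⁻¹ := by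
        rw [hmp.card_divisors_mul, hprime.divisors, Finset.card_pair hprime.one_lt.ne,
          Nat.cast_mul]
  calc X / (16 * Real.log X) * (m * #m.divisors : ℝ)⁻¹
      = 1 / 4 * (X / m) * (4 * Real.log X * #m.divisors)⁻¹ := by field_simp; norm_num
    _ ≤ (∑ p ∈ primesAbove (X / m), Real.log p) * (4 * Real.log X * #m.divisors)⁻¹ := by gcongr
    _ ≤ _ := by rw [Finset.sum_mul]; exact Finset.sum_le_sum hterm

lemma sqrt_log_le_sum_squarefreeUpTo {X : ℕ} (hX : 4 ≤ X) :
    √(Real.log X) ≤ 3 * ∑ m ∈ squarefreeUpTo X.sqrt, (m * #m.divisors : ℝ)⁻¹ := by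
  set G := ∑ m ∈ squarefreeUpTo X.sqrt, (m * #m.divisors : ℝ)⁻¹
  have hlog : Real.log X ≤ 4 * Real.log X.sqrt := by
    have hs : 2 ≤ X.sqrt := Nat.le_sqrt.mpr hX
    have hXs : X ≤ X.sqrt ^ 4 := by
      nlinarith [X.lt_succ_sqrt, Nat.mul_le_mul hs hs]
    calc Real.log X ≤ Real.log ((X.sqrt : ℝ) ^ 4) := by
          gcongr
          exact_mod_cast hXs
      _ = 4 * Real.log X.sqrt := by rw [Real.log_pow, Nat.cast_ofNat]
  have hsq : Real.log X ≤ 8 * G ^ 2 := by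
    linarith [log_le_two_mul_sum_squarefreeUpTo X.sqrt, sum_squarefreeUpTo_le_sq X.sqrt]
  have hG : 0 ≤ G := Finset.sum_nonneg fun _ _ ↦ by positivity
  refine Real.sqrt_le_iff.mpr ⟨by positivity, ?_⟩
  nlinarith

theorem eventually_div_sqrt_log_le_sum_inv_card_divisors :
    ∀ᶠ X : ℕ in atTop, 1 / 48 * (X / √(Real.log X)) ≤
      ∑ q ∈ Finset.Ico X (4 * X), (#q.divisors : ℝ)⁻¹ := by
  obtain ⟨y₀, hy₀⟩ := eventually_atTop.mp eventually_quarter_mul_le_sum_log_primesAbove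
  have hsqrt : ∀ᶠ X : ℕ in atTop, y₀ ≤ √(X : ℝ) :=
    (Real.tendsto_sqrt_atTop.comp tendsto_natCast_atTop_atTop).eventually_ge_atTop y₀
  filter_upwards [hsqrt, eventually_ge_atTop 4] with X hX hX4
  have hlog : 0 < Real.log X := Real.log_pos (by exact_mod_cast (by lia : 1 < X))
  have hprimes (m : ℕ) (hm : m ∈ squarefreeUpTo X.sqrt) : y₀ ≤ X / m := by
    obtain ⟨⟨hm0, hmX⟩, -⟩ := mem_squarefreeUpTo.mp hm
    refine hX.trans ((le_div_iff₀ (Nat.cast_pos.mpr hm0)).mpr ?_)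
    calc √(X : ℝ) * m ≤ √X * √X := by
          gcongr
          exact (Nat.cast_le.mpr hmX).trans Real.nat_sqrt_le_real_sqrt
      _ = X := Real.mul_self_sqrt X.cast_nonneg
  calc 1 / 48 * (X / √(Real.log X))
      = X / (48 * Real.log X) * √(Real.log X) := by
        field_simp
        rw [Real.sq_sqrt hlog.le]
    _ ≤ X / (48 * Real.log X) *
          (3 * ∑ m ∈ squarefreeUpTo X.sqrt, (m * #m.divisors : ℝ)⁻¹) := by
        gcongr
        exact sqrt_log_le_sum_squarefreeUpTo hX4
    _ = ∑ m ∈ squarefreeUpTo X.sqrt, X / (16 * Real.log X) * (m * #m.divisors : ℝ)⁻¹ := by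
        rw [← Finset.mul_sum]; ring
    _ ≤ ∑ m ∈ squarefreeUpTo X.sqrt, ∑ p ∈ primesAbove (X / m), (#(m * p).divisors : ℝ)⁻¹ :=
        Finset.sum_le_sum fun m hm ↦
          sum_inv_card_divisors_primesAbove_ge (by lia) hm (hy₀ _ (hprimes m hm))
    _ ≤ _ := sum_inv_card_divisors_mul_le X

end DivisorSums

section Blocks

open scoped Finset

lemma sum_sum_le_two_mul_sum_filter_le {ι : Type*} [LinearOrder ι] {s : Finset ι}
    {f g : ι → ι → ℝ} (hf : ∀ i j, f i j = f j i) (hg : ∀ i j, 0 ≤ g i j)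
    (hfg : ∀ i ∈ s, ∀ j ∈ s, j ≤ i → f i j ≤ g i j) :
    ∑ i ∈ s, ∑ j ∈ s, f i j ≤ 2 * ∑ i ∈ s, ∑ j ∈ s with j ≤ i, g i j := by
  have hle (i : ι) (hi : i ∈ s) (j : ι) (hj : j ∈ s) :
      f i j ≤ (if j ≤ i then g i j else 0) + if i ≤ j then g j i else 0 := by
    rcases le_total j i with h | h
    · have : 0 ≤ if i ≤ j then g j i else 0 := ite_nonneg (hg j i) le_rfl
      rw [if_pos h]
      linarith [hfg i hi j hj h]
    · have : 0 ≤ if j ≤ i then g i j else 0 := ite_nonneg (hg i j) le_rfl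
      rw [if_pos h, hf]
      linarith [hfg j hj i hi h]
  calc ∑ i ∈ s, ∑ j ∈ s, f i j
      ≤ ∑ i ∈ s, ∑ j ∈ s, ((if j ≤ i then g i j else 0) + if i ≤ j then g j i else 0) :=
        Finset.sum_le_sum fun i hi ↦ Finset.sum_le_sum fun j hj ↦ hle i hi j hj
    _ = 2 * ∑ i ∈ s, ∑ j ∈ s with j ≤ i, g i j := by
        simp only [Finset.sum_add_distrib, Finset.sum_filter]
        rw [Finset.sum_comm (f := fun i j ↦ if i ≤ j then g j i else 0), two_mul]

/-- The block of integers `q` with `4 ^ n ≤ q < 4 ^ (n + 1)`, on which approximation radii are made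
constant. -/
def block (n : ℕ) : Finset ℕ := Finset.Ico (4 ^ n) (4 ^ (n + 1))

lemma log_of_mem_block {n q : ℕ} (hq : q ∈ block n) : Nat.log 4 q = n :=
  Nat.log_eq_of_pow_le_of_lt_pow (Finset.mem_Ico.mp hq).1 (Finset.mem_Ico.mp hq).2

lemma sum_Ico_pow_eq_sum_block (f : ℕ → ℝ) {a b : ℕ} (hab : a ≤ b) :
    ∑ q ∈ Finset.Ico (4 ^ a) (4 ^ b), f q = ∑ n ∈ Finset.Ico a b, ∑ q ∈ block n, f q := by
  induction b, hab using Nat.le_induction with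
  | base => simp
  | succ b hab ih =>
    rw [Finset.sum_Ico_succ_top hab, ← ih, block, Finset.sum_Ico_consecutive] <;> gcongr <;> lia

variable {w : ℕ → ℝ} {a : ℕ}

lemma sum_block_mul_gcd_div_le (hw : ∀ q, 0 ≤ w q)
    (hwτ : ∀ q, 4 ^ a ≤ q → w q ≤ (#q.divisors : ℝ)⁻¹)
    (hdouble : ∀ n, a ≤ n →
      ∑ q ∈ Finset.Ico (4 ^ a) (4 ^ (n + 1)), w q ≤ 2 * ∑ q ∈ block n, w q)
    {n : ℕ} (hn : a ≤ n) :
    ∑ r ∈ block n, ∑ q ∈ Finset.Ico (4 ^ a) (4 ^ (n + 1)), w r * w q * (r.gcd q / r) ≤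
      12 * ∑ r ∈ block n, w r := by
  have hpow : 4 ^ a ≤ 4 ^ n := Nat.pow_le_pow_right (by norm_num) hn
  have hsub {k : ℕ} : Finset.Ico (4 ^ k) (4 ^ (n + 1)) ⊆ Finset.Ioc 0 (4 ^ (n + 1)) := fun q hq ↦
    Finset.mem_Ioc.mpr
      ⟨(Nat.pow_pos (by norm_num)).trans_le (Finset.mem_Ico.mp hq).1, (Finset.mem_Ico.mp hq).2.le⟩
  have hr (r : ℕ) (hr : r ∈ block n) : (4 : ℝ) ^ n ≤ r := mod_cast (Finset.mem_Ico.mp hr).1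
  calc ∑ r ∈ block n, ∑ q ∈ Finset.Ico (4 ^ a) (4 ^ (n + 1)), w r * w q * (r.gcd q / r)
      ≤ ∑ r ∈ block n, ∑ q ∈ Finset.Ico (4 ^ a) (4 ^ (n + 1)), w r * w q * (r.gcd q / 4 ^ n) := by
        gcongr with r hrn q
        · exact mul_nonneg (hw r) (hw q)
        · exact hr r hrn
    _ = (∑ r ∈ block n, ∑ q ∈ Finset.Ico (4 ^ a) (4 ^ (n + 1)), w r * w q * r.gcd q) / 4 ^ n := by
        simp only [← mul_div_assoc, Finset.sum_div]
    _ ≤ (4 ^ (n + 1) : ℕ) * (∑ r ∈ block n, w r + 2 * ∑ r ∈ block n, w r) / 4 ^ n := by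
        gcongr
        exact (sum_mul_mul_gcd_le hsub hsub hw
          (fun q hq ↦ hwτ q (hpow.trans (Finset.mem_Ico.mp hq).1))
          (fun q hq ↦ hwτ q (Finset.mem_Ico.mp hq).1)).trans <|
            mul_le_mul_of_nonneg_left (add_le_add_right (hdouble n hn) _) (Nat.cast_nonneg _)
    _ = 12 * ∑ r ∈ block n, w r := by push_cast; field_simp; ring

variable {R : ℕ → ℝ}

lemma sum_radius_mul_gcd_div_le (hw : ∀ q, 0 ≤ w q)
    (hwτ : ∀ q, 4 ^ a ≤ q → w q ≤ (#q.divisors : ℝ)⁻¹)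
    (hdouble : ∀ n, a ≤ n →
      ∑ q ∈ Finset.Ico (4 ^ a) (4 ^ (n + 1)), w q ≤ 2 * ∑ q ∈ block n, w q)
    (hR : ∀ n, 0 ≤ R n) {b : ℕ} (hab : a ≤ b) :
    ∑ r ∈ Finset.Ico (4 ^ a) (4 ^ b), ∑ q ∈ Finset.Ico (4 ^ a) (4 ^ b) with q ≤ r,
        w r * w q * (r.gcd q / r) * (2 * R (Nat.log 4 r)) ≤
      12 * ∑ r ∈ Finset.Ico (4 ^ a) (4 ^ b), w r * (2 * R (Nat.log 4 r)) := by
  simp only [sum_Ico_pow_eq_sum_block _ hab, Finset.mul_sum (s := Finset.Ico a b)]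
  refine Finset.sum_le_sum fun n hn ↦ ?_
  have hnonneg (r q : ℕ) : 0 ≤ w r * w q * (r.gcd q / r) :=
    mul_nonneg (mul_nonneg (hw r) (hw q)) (by positivity)
  have hsub {r : ℕ} (hr : r ∈ block n) : {q ∈ Finset.Ico (4 ^ a) (4 ^ b) | q ≤ r} ⊆
      Finset.Ico (4 ^ a) (4 ^ (n + 1)) := by
    intro q hq
    obtain ⟨hq, hqr⟩ := Finset.mem_filter.mp hq
    exact Finset.mem_Ico.mpr ⟨(Finset.mem_Ico.mp hq).1, hqr.trans_lt (Finset.mem_Ico.mp hr).2⟩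
  calc ∑ r ∈ block n, ∑ q ∈ Finset.Ico (4 ^ a) (4 ^ b) with q ≤ r,
        w r * w q * (r.gcd q / r) * (2 * R (Nat.log 4 r))
      ≤ ∑ r ∈ block n, ∑ q ∈ Finset.Ico (4 ^ a) (4 ^ (n + 1)),
          w r * w q * (r.gcd q / r) * (2 * R n) := by
        refine Finset.sum_le_sum fun r hr ↦ ?_
        rw [log_of_mem_block hr]
        exact Finset.sum_le_sum_of_subset_of_nonneg (hsub hr) fun q _ _ ↦
          mul_nonneg (hnonneg r q) (mul_nonneg zero_le_two (hR n))
    _ ≤ (12 * ∑ r ∈ block n, w r) * (2 * R n) := by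
        simp only [← Finset.sum_mul]
        have hRn := hR n
        gcongr
        exact sum_block_mul_gcd_div_le hw hwτ hdouble (Finset.mem_Ico.mp hn).1
    _ = 12 * ∑ r ∈ block n, w r * (2 * R (Nat.log 4 r)) := by
        rw [mul_assoc, Finset.sum_mul]
        congr 1
        exact Finset.sum_congr rfl fun r hr ↦ by rw [log_of_mem_block hr]

-- The overlap of each pair is estimated with the larger of `q` and `r` in the denominator of the
-- error `gcd / r`, which is what makes the errors summable against the weights.
lemma sum_approxSet_inter_le (c : ℕ → UnitAddCircle) (hw : ∀ q, 0 ≤ w q)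
    (hwτ : ∀ q, 4 ^ a ≤ q → w q ≤ (#q.divisors : ℝ)⁻¹)
    (hdouble : ∀ n, a ≤ n →
      ∑ q ∈ Finset.Ico (4 ^ a) (4 ^ (n + 1)), w q ≤ 2 * ∑ q ∈ block n, w q)
    (hR : ∀ n, 0 ≤ R n) (hR' : ∀ n, R n ≤ 1 / 2) {b : ℕ} (hab : a ≤ b) :
    let A q := approxSet (c q) (R (Nat.log 4 q)) q
    let s := Finset.Ico (4 ^ a) (4 ^ b)
    ∑ q ∈ s, ∑ r ∈ s, w q * w r * volume.real (A q ∩ A r) ≤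
      (∑ q ∈ s, w q * volume.real (A q)) ^ 2 + 24 * ∑ q ∈ s, w q * volume.real (A q) := by
  intro A s
  have hs (q : ℕ) (hq : q ∈ s) : q ≠ 0 :=
    ((Nat.pow_pos (by norm_num)).trans_le (Finset.mem_Ico.mp hq).1).ne'
  let ρ (q : ℕ) : ℝ := 2 * R (Nat.log 4 q)
  let err (r q : ℕ) : ℝ := w r * w q * (r.gcd q / r) * ρ r
  have hA (q : ℕ) (hq : q ∈ s) : volume.real (A q) = ρ q :=
    measureReal_approxSet (c q) (hR _) (hR' _) (hs q hq)
  have herr (r q : ℕ) : 0 ≤ err r q :=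
    mul_nonneg (mul_nonneg (mul_nonneg (hw r) (hw q)) (by positivity))
      (mul_nonneg zero_le_two (hR _))
  have hexcess (r : ℕ) (hr : r ∈ s) (q : ℕ) :
      w r * w q * volume.real (A r ∩ A q) - w r * ρ r * (w q * ρ q) ≤ err r q := by
    calc w r * w q * volume.real (A r ∩ A q) - w r * ρ r * (w q * ρ q)
        ≤ w r * w q * ((ρ q + r.gcd q / r) * ρ r) - w r * ρ r * (w q * ρ q) := by
          rw [Set.inter_comm, ← hA r hr]
          gcongr
          · exact mul_nonneg (hw r) (hw q)
          · exact measureReal_approxSet_inter_le _ _ _ (hR _) q (hs r hr)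
      _ = err r q := by simp only [err]; ring
  have htotal : ∑ r ∈ s, ∑ q ∈ s,
      (w r * w q * volume.real (A r ∩ A q) - w r * ρ r * (w q * ρ q)) ≤
        2 * (12 * ∑ r ∈ s, w r * ρ r) :=
    (sum_sum_le_two_mul_sum_filter_le (fun q r ↦ by rw [Set.inter_comm]; ring) herr
      fun r hr q _ _ ↦ hexcess r hr q).trans <|
        mul_le_mul_of_nonneg_left (sum_radius_mul_gcd_div_le hw hwτ hdouble hR hab) zero_le_two
  have hmean : ∑ q ∈ s, w q * volume.real (A q) = ∑ q ∈ s, w q * ρ q :=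
    Finset.sum_congr rfl fun q hq ↦ by rw [hA q hq]
  simp only [Finset.sum_sub_distrib] at htotal
  rw [hmean, sq, Finset.sum_mul_sum]
  linarith

end Blocks

section Weights

open scoped Finset

lemma one_le_log1 (x : ℝ) : 1 ≤ log1 x := le_max_left _ _

lemma log1_le_log1 {x y : ℝ} (hx : 0 < x) (hxy : x ≤ y) : log1 x ≤ log1 y :=
  max_le_max_left 1 (Real.log_le_log hx hxy)

lemma log1_four_mul_le {x : ℝ} (hx : 0 < x) : log1 (4 * x) ≤ 4 * log1 x := by
  have h4 : Real.log 4 ≤ 3 := by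
    linarith [Real.log_le_sub_one_of_pos (show (0 : ℝ) < 4 by norm_num)]
  refine max_le (by linarith [one_le_log1 x]) ?_
  rw [Real.log_mul four_ne_zero hx.ne']
  linarith [one_le_log1 x, show Real.log x ≤ log1 x from le_max_right _ _]

/-- The total weight given to `block n`, a lower bound for the sum of `1 / τ(q)` over large blocks,
where `τ(q)` is the number of divisors of `q`. -/
noncomputable def blockMass (n : ℕ) : ℝ := 1 / 48 * (4 ^ n / √(log1 (4 ^ n)))

lemma sqrt_log1_pos (x : ℝ) : 0 < √(log1 x) := Real.sqrt_pos.mpr (one_pos.trans_le (one_le_log1 x))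

lemma blockMass_pos (n : ℕ) : 0 < blockMass n := by
  have hpos := sqrt_log1_pos (4 ^ n)
  unfold blockMass
  positivity

lemma blockMass_succ_le (n : ℕ) : blockMass (n + 1) ≤ 4 * blockMass n := by
  have hlog : log1 (4 ^ n) ≤ log1 (4 ^ (n + 1)) :=
    log1_le_log1 (by positivity) (pow_le_pow_right₀ (by norm_num) n.le_succ)
  have hpos := sqrt_log1_pos (4 ^ n)
  calc blockMass (n + 1) ≤ 1 / 48 * (4 ^ (n + 1) / √(log1 (4 ^ n))) := by
        unfold blockMass
        gcongr
    _ = 4 * blockMass n := by rw [blockMass]; ring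

lemma two_mul_blockMass_le (n : ℕ) : 2 * blockMass n ≤ blockMass (n + 1) := by
  have hsqrt : √(log1 (4 ^ (n + 1))) ≤ 2 * √(log1 (4 ^ n)) := by
    calc √(log1 (4 ^ (n + 1))) ≤ √(2 ^ 2 * log1 (4 ^ n)) := by
          refine Real.sqrt_le_sqrt ?_
          rw [pow_succ', show (2 : ℝ) ^ 2 = 4 by norm_num]
          exact log1_four_mul_le (by positivity)
      _ = 2 * √(log1 (4 ^ n)) := by
          rw [Real.sqrt_mul (by positivity), Real.sqrt_sq zero_le_two]
  have hpos := sqrt_log1_pos (4 ^ (n + 1))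
  calc 2 * blockMass n = 1 / 48 * (4 ^ (n + 1) / (2 * √(log1 (4 ^ n)))) := by
        rw [blockMass]
        field_simp
        ring
    _ ≤ blockMass (n + 1) := by
        unfold blockMass
        gcongr

lemma sum_Ico_le_two_mul {v : ℕ → ℝ} (hv : ∀ n, 0 ≤ v n) (hdouble : ∀ n, 2 * v n ≤ v (n + 1))
    {a n : ℕ} (han : a ≤ n) : ∑ m ∈ Finset.Ico a (n + 1), v m ≤ 2 * v n := by
  induction n, han using Nat.le_induction with
  | base => rw [Nat.Ico_succ_singleton, Finset.sum_singleton]; linarith [hv a]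
  | succ n han ih => rw [Finset.sum_Ico_succ_top (by lia)]; linarith [hdouble n]

lemma eventually_blockMass_le_sum_inv_card_divisors :
    ∀ᶠ n in atTop, blockMass n ≤ ∑ q ∈ block n, (#q.divisors : ℝ)⁻¹ := by
  have hpow : Tendsto (4 ^ · : ℕ → ℕ) atTop atTop :=
    tendsto_pow_atTop_atTop_of_one_lt (by norm_num)
  filter_upwards [hpow.eventually eventually_div_sqrt_log_le_sum_inv_card_divisors,
    eventually_gt_atTop 0] with n hn hn0
  have hlog : 0 < Real.log (4 ^ n : ℝ) := Real.log_pos (one_lt_pow₀ (by norm_num) hn0.ne')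
  calc blockMass n ≤ 1 / 48 * (4 ^ n / √(Real.log (4 ^ n))) := by
        unfold blockMass
        gcongr
        exact le_max_right _ _
    _ ≤ ∑ q ∈ block n, (#q.divisors : ℝ)⁻¹ := by
        rw [block, pow_succ']
        exact_mod_cast hn

/-- The weight of `q` in the second-moment argument: proportional to `1 / τ(q)` on each block, and
of total mass `blockMass n` on `block n`. -/
noncomputable def blockWeight (q : ℕ) : ℝ :=
  blockMass (Nat.log 4 q) / (∑ r ∈ block (Nat.log 4 q), (#r.divisors : ℝ)⁻¹) *
    (#q.divisors : ℝ)⁻¹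

lemma blockWeight_nonneg (q : ℕ) : 0 ≤ blockWeight q :=
  mul_nonneg (div_nonneg (blockMass_pos _).le (Finset.sum_nonneg fun _ _ ↦ by positivity))
    (by positivity)

lemma blockWeight_le {q : ℕ}
    (h : blockMass (Nat.log 4 q) ≤ ∑ r ∈ block (Nat.log 4 q), (#r.divisors : ℝ)⁻¹) :
    blockWeight q ≤ (#q.divisors : ℝ)⁻¹ :=
  mul_le_of_le_one_left (by positivity) (div_le_one_of_le₀ h ((blockMass_pos _).le.trans h))

lemma sum_block_blockWeight (n : ℕ) : ∑ q ∈ block n, blockWeight q = blockMass n := by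
  have hpos : 0 < ∑ q ∈ block n, (#q.divisors : ℝ)⁻¹ := by
    refine Finset.sum_pos (fun q hq ↦ ?_) (Finset.nonempty_Ico.mpr (by gcongr <;> lia))
    have hq0 : q ≠ 0 := ((Nat.pow_pos (by norm_num)).trans_le (Finset.mem_Ico.mp hq).1).ne'
    simpa [Nat.pos_iff_ne_zero] using hq0
  calc ∑ q ∈ block n, blockWeight q
      = ∑ q ∈ block n,
          blockMass n / (∑ r ∈ block n, (#r.divisors : ℝ)⁻¹) * (#q.divisors : ℝ)⁻¹ :=
        Finset.sum_congr rfl fun q hq ↦ by rw [blockWeight, log_of_mem_block hq]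
    _ = blockMass n := by rw [← Finset.mul_sum, div_mul_cancel₀ _ hpos.ne']

end Weights

section Divergence

variable {ψ : ℕ → ℝ}

lemma not_summable_pow_mul_div_sqrt_log1 (hψ : ∀ q, 0 ≤ ψ q)
    (hanti : ∀ q r, 1 ≤ q → q ≤ r → ψ r ≤ ψ q)
    (hdiv : ¬ Summable fun q : ℕ ↦ ψ q / √(log1 q)) :
    ¬ Summable fun n ↦ (4 : ℝ) ^ n * (ψ (4 ^ n) / √(log1 (4 ^ n))) := by
  have hnonneg (q : ℕ) : 0 ≤ ψ q / √(log1 q) := div_nonneg (hψ q) (Real.sqrt_nonneg _)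
  have hdecreasing ⦃q r : ℕ⦄ (hq : 0 < q) (hqr : q ≤ r) : ψ r / √(log1 r) ≤ ψ q / √(log1 q) :=
    div_le_div₀ (hψ q) (hanti q r hq hqr) (sqrt_log1_pos _) <|
      Real.sqrt_le_sqrt (log1_le_log1 (Nat.cast_pos.mpr hq) (Nat.cast_le.mpr hqr))
  have hgap : SuccDiffBounded 4 (fun n ↦ 4 ^ n) := fun n ↦ by
    simp only [pow_succ, smul_eq_mul]
    lia
  rw [← summable_schlomilch_iff_of_nonneg hnonneg hdecreasing (fun n ↦ Nat.pow_pos (by norm_num))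
    (pow_right_strictMono₀ (by norm_num)) four_ne_zero hgap] at hdiv
  refine fun hsum ↦ hdiv ((hsum.mul_left 3).congr fun n ↦ ?_)
  push_cast
  ring

lemma not_summable_blockMass_mul (hψ : ∀ q, 0 ≤ ψ q) (hanti : ∀ q r, 1 ≤ q → q ≤ r → ψ r ≤ ψ q)
    (hdiv : ¬ Summable fun q : ℕ ↦ ψ q / √(log1 q)) :
    ¬ Summable fun n ↦ blockMass n * ψ (4 ^ (n + 1)) := by
  have hcondense := not_summable_pow_mul_div_sqrt_log1 hψ hanti hdiv
  rw [← summable_nat_add_iff 1] at hcondense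
  refine fun hsum ↦ hcondense (Summable.of_nonneg_of_le (fun n ↦ ?_) (fun n ↦ ?_)
    (hsum.mul_left 192))
  · exact mul_nonneg (by positivity) (div_nonneg (hψ _) (Real.sqrt_nonneg _))
  · calc 4 ^ (n + 1) * (ψ (4 ^ (n + 1)) / √(log1 (4 ^ (n + 1))))
        = 48 * (blockMass (n + 1) * ψ (4 ^ (n + 1))) := by
          rw [blockMass]
          ring
      _ ≤ 48 * (4 * blockMass n * ψ (4 ^ (n + 1))) := by
          gcongr
          · exact hψ _
          · exact blockMass_succ_le n
      _ = 192 * (blockMass n * ψ (4 ^ (n + 1))) := by ring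

lemma not_summable_inv_sqrt_log1 : ¬ Summable fun q : ℕ ↦ (√(log1 q))⁻¹ := by
  intro h
  refine Real.not_summable_natCast_inv (Summable.of_nonneg_of_le (fun q ↦ by positivity)
    (fun q ↦ ?_) h)
  rcases q.eq_zero_or_pos with rfl | hq
  · simp
  have hq1 : (1 : ℝ) ≤ q := Nat.one_le_cast.mpr hq
  refine inv_anti₀ (sqrt_log1_pos _) (Real.sqrt_le_iff.mpr ⟨q.cast_nonneg, max_le ?_ ?_⟩)
  · exact one_le_pow₀ hq1
  · nlinarith [Real.log_le_sub_one_of_pos (zero_lt_one.trans_le hq1)]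

lemma not_summable_min_div {c : ℝ} (hc : 0 < c)
    (hanti : ∀ q r, 1 ≤ q → q ≤ r → ψ r ≤ ψ q)
    (hdiv : ¬ Summable fun q : ℕ ↦ ψ q / √(log1 q)) :
    ¬ Summable fun q : ℕ ↦ min (ψ q) c / √(log1 q) := by
  by_cases hlarge : ∃ q, 1 ≤ q ∧ ψ q ≤ c
  · obtain ⟨q, hq, hqc⟩ := hlarge
    have heq (n : ℕ) : min (ψ (n + q)) c = ψ (n + q) :=
      min_eq_left ((hanti q _ hq (Nat.le_add_left q n)).trans hqc)
    rw [← summable_nat_add_iff q] at hdiv ⊢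
    simpa only [heq] using hdiv
  · push Not at hlarge
    have heq (n : ℕ) : min (ψ (n + 1)) c = c := min_eq_right (hlarge _ n.succ_pos).le
    have hinv := not_summable_inv_sqrt_log1
    rw [← summable_nat_add_iff 1] at hinv ⊢
    simp only [heq, div_eq_mul_inv]
    rwa [summable_mul_left_iff hc.ne']

lemma exists_le_sum_Ico_of_not_summable {f : ℕ → ℝ} (hf : ∀ n, 0 ≤ f n) (h : ¬ Summable f)
    (a : ℕ) (C : ℝ) : ∃ b, a ≤ b ∧ C ≤ ∑ n ∈ Finset.Ico a b, f n := by
  have htop := (not_summable_iff_tendsto_nat_atTop_of_nonneg hf).mp h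
  obtain ⟨b, hb, hab⟩ := ((htop.eventually_ge_atTop (C + ∑ n ∈ Finset.range a, f n)).and
    (eventually_ge_atTop a)).exists
  refine ⟨b, hab, ?_⟩
  rw [Finset.sum_Ico_eq_sub f hab]
  linarith

end Divergence

section Circle

variable {ψ : ℕ → ℝ}

lemma ae_frequently_mem_approxSet_log (c : ℕ → UnitAddCircle) {R : ℕ → ℝ} (hR : ∀ n, 0 ≤ R n)
    (hR' : ∀ n, R n ≤ 1 / 2) (hdiv : ¬ Summable fun n ↦ blockMass n * R n) :
    ∀ᵐ x : UnitAddCircle, ∃ᶠ q in atTop, x ∈ approxSet (c q) (R (Nat.log 4 q)) q := by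
  have : IsProbabilityMeasure (volume : Measure UnitAddCircle) := ⟨UnitAddCircle.measure_univ⟩
  refine ae_frequently_mem_of_sum_inter_le (fun q ↦ measurableSet_approxSet _ _ q) blockWeight 24
    fun N C ↦ ?_
  obtain ⟨n₀, hn₀⟩ := eventually_atTop.mp eventually_blockMass_le_sum_inv_card_divisors
  let a := max n₀ N
  obtain ⟨b, hab, hC⟩ := exists_le_sum_Ico_of_not_summable
    (fun n ↦ mul_nonneg (blockMass_pos n).le (hR n)) hdiv a (C / 2)
  refine ⟨Finset.Ico (4 ^ a) (4 ^ b), fun q hq ↦ ?_, ?_,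
    sum_approxSet_inter_le c blockWeight_nonneg (fun q hq ↦ ?_) (fun n hn ↦ ?_) hR hR' hab⟩
  · calc N ≤ 4 ^ N := (Nat.lt_pow_self (by norm_num)).le
      _ ≤ 4 ^ a := Nat.pow_le_pow_right (by norm_num) (le_max_right _ _)
      _ ≤ q := (Finset.mem_Ico.mp hq).1
  · calc C ≤ 2 * ∑ n ∈ Finset.Ico a b, blockMass n * R n := by linarith
      _ = ∑ n ∈ Finset.Ico a b, ∑ q ∈ block n, blockWeight q * (2 * R n) := by
        rw [Finset.mul_sum]
        refine Finset.sum_congr rfl fun n _ ↦ ?_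
        rw [← Finset.sum_mul, sum_block_blockWeight]
        ring
      _ = ∑ n ∈ Finset.Ico a b, ∑ q ∈ block n,
          blockWeight q * volume.real (approxSet (c q) (R (Nat.log 4 q)) q) := by
        refine Finset.sum_congr rfl fun n _ ↦ Finset.sum_congr rfl fun q hq ↦ ?_
        have hq0 : q ≠ 0 := ((Nat.pow_pos (by norm_num)).trans_le (Finset.mem_Ico.mp hq).1).ne'
        rw [log_of_mem_block hq, measureReal_approxSet (c q) (hR n) (hR' n) hq0]
      _ = _ := (sum_Ico_pow_eq_sum_block _ hab).symm
  · exact blockWeight_le (hn₀ _ ((le_max_left _ _).trans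
      (Nat.le_log_of_pow_le (by norm_num) hq)))
  · simp only [sum_Ico_pow_eq_sum_block _ (Nat.le_succ_of_le hn), sum_block_blockWeight]
    exact sum_Ico_le_two_mul (fun m ↦ (blockMass_pos m).le) two_mul_blockMass_le hn

lemma approxSet_subset_approxSet (c : UnitAddCircle) {ρ ρ' : ℝ} (h : ρ ≤ ρ') (q : ℕ) :
    approxSet c ρ q ⊆ approxSet c ρ' q :=
  Set.preimage_mono (Metric.ball_subset_ball h)

theorem ae_frequently_mem_approxSet (c : ℕ → UnitAddCircle) (hψ : ∀ q, 0 ≤ ψ q)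
    (hanti : ∀ q r, 1 ≤ q → q ≤ r → ψ r ≤ ψ q)
    (hdiv : ¬ Summable fun q : ℕ ↦ ψ q / √(log1 q)) :
    ∀ᵐ x : UnitAddCircle, ∃ᶠ q in atTop, x ∈ approxSet (c q) (ψ q) q := by
  let R (n : ℕ) : ℝ := min (ψ (4 ^ (n + 1))) (1 / 2)
  have hmin (q : ℕ) : 0 ≤ min (ψ q) (1 / 2) := le_min (hψ q) (by norm_num)
  have hRdiv : ¬ Summable fun n ↦ blockMass n * R n :=
    not_summable_blockMass_mul hmin (fun q r hq hqr ↦ min_le_min_right _ (hanti q r hq hqr))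
      (not_summable_min_div (by norm_num) hanti hdiv)
  have hRψ (q : ℕ) (hq : 1 ≤ q) : R (Nat.log 4 q) ≤ ψ q :=
    (min_le_left _ _).trans (hanti _ _ hq (Nat.lt_pow_succ_log_self (by norm_num) q).le)
  filter_upwards [ae_frequently_mem_approxSet_log c (fun n ↦ hmin _) (fun n ↦ min_le_right _ _)
    hRdiv] with x hx
  exact (hx.and_eventually (eventually_ge_atTop 1)).mono fun q hq ↦
    approxSet_subset_approxSet (c q) (hRψ q hq.2) q hq.1

end Circle

lemma distNearestInt_sub_lt_iff (q : ℕ) (α g ρ : ℝ) :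
    distNearestInt (q * α - g) < ρ ↔ (α : UnitAddCircle) ∈ approxSet g ρ q := by
  rw [approxSet, Set.mem_preimage, mem_ball_iff_norm, ← AddCircle.coe_nsmul, ← AddCircle.coe_sub,
    UnitAddCircle.norm_eq, nsmul_eq_mul, distNearestInt]

lemma one_le_iterlog {j : ℕ} (hj : j ≠ 0) (x : ℝ) : 1 ≤ iterlog j x := by
  obtain ⟨i, rfl⟩ := Nat.exists_eq_succ_of_ne_zero hj
  exact one_le_log1 _

lemma sqrt_log1_le_mul_prod_iterlog_mul {k : ℕ} (hk : k ≠ 0) {ε : ℝ} (hε : 0 ≤ ε) (x : ℝ) :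
    √(log1 x) ≤ √(iterlog 1 x) * (∏ j ∈ Finset.Ico 2 k, iterlog j x) * iterlog k x ^ (1 + ε) := by
  have hprod : 1 ≤ ∏ j ∈ Finset.Ico 2 k, iterlog j x :=
    Finset.one_le_prod fun j hj ↦ one_le_iterlog (by have := Finset.mem_Ico.mp hj; lia) x
  have hpow : 1 ≤ iterlog k x ^ (1 + ε) :=
    Real.one_le_rpow (one_le_iterlog hk x) (by positivity)
  rw [mul_assoc]
  exact le_mul_of_one_le_right (Real.sqrt_nonneg _) (one_le_mul_of_one_le_of_one_le hprod hpow)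

lemma summable_div_iterlog_of_summable_div_sqrt_log1 {ψ : ℕ → ℝ} (hψ : ∀ q, 0 ≤ ψ q) {k : ℕ}
    (hk : k ≠ 0) {ε : ℝ} (hε : 0 ≤ ε) (h : Summable fun q : ℕ ↦ ψ q / √(log1 q)) :
    Summable fun q : ℕ ↦ ψ q /
      (√(iterlog 1 q) * (∏ j ∈ Finset.Ico 2 k, iterlog j q) * iterlog k q ^ (1 + ε)) := by
  have hle (q : ℕ) := sqrt_log1_le_mul_prod_iterlog_mul hk hε (q : ℝ)
  exact Summable.of_nonneg_of_le
    (fun q ↦ div_nonneg (hψ q) ((Real.sqrt_nonneg _).trans (hle q)))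
    (fun q ↦ div_le_div_of_nonneg_left (hψ q) (sqrt_log1_pos _) (hle q)) h

theorem stmt0_general (γ ψ : ℕ → ℝ) (hψ0 : ∀ q, 0 ≤ ψ q)
    (hψdec : ∀ q r : ℕ, 1 ≤ q → q ≤ r → ψ r ≤ ψ q)
    (hdiv : ¬ Summable fun q : ℕ ↦ ψ q / √(log1 q)) :
    volume (WSet ψ γ) = 1 := by
  have hcircle : ∀ᵐ α : ℝ ∂volume.restrict (Set.Ioc (0 : ℝ) (0 + 1)),
      ∃ᶠ q in atTop, (α : UnitAddCircle) ∈ approxSet (γ q) (ψ q) q :=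
    (UnitAddCircle.measurePreserving_mk 0).quasiMeasurePreserving.ae
      (ae_frequently_mem_approxSet (fun q ↦ γ q) hψ0 hψdec hdiv)
  have hmem : ∀ᵐ α, α ∈ Set.Ioc (0 : ℝ) 1 → α ∈ WSet ψ γ := by
    rw [zero_add, ae_restrict_iff' measurableSet_Ioc] at hcircle
    filter_upwards [hcircle] with α hα hα01
    refine ⟨Set.Ioc_subset_Icc_self hα01, Nat.frequently_atTop_iff_infinite.mp ?_⟩
    refine ((hα hα01).and_eventually (eventually_ge_atTop 1)).mono fun q hq ↦ ⟨hq.2, ?_⟩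
    exact (distNearestInt_sub_lt_iff q α (γ q) (ψ q)).mpr hq.1
  refine le_antisymm ?_ ?_
  · calc volume (WSet ψ γ) ≤ volume (Set.Icc (0 : ℝ) 1) := measure_mono fun α hα ↦ hα.1
      _ = 1 := by rw [Real.volume_Icc, sub_zero, ENNReal.ofReal_one]
  · calc (1 : ENNReal) = volume (Set.Ioc (0 : ℝ) 1) := by
          rw [Real.volume_Ioc, sub_zero, ENNReal.ofReal_one]
      _ ≤ volume (WSet ψ γ) := measure_mono_ae hmem

theorem stmt0 (γ : ℕ → ℝ) (ψ : ℕ → ℝ) (hψ0 : ∀ q, 0 ≤ ψ q)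
    (hψdec : ∀ q r : ℕ, 1 ≤ q → q ≤ r → ψ r ≤ ψ q)
    (hdiv : ∃ ε > (0:ℝ), ∃ k : ℕ, 2 ≤ k ∧
      ¬ Summable (fun q : ℕ => ψ q /
        (Real.sqrt (iterlog 1 q) * (∏ j ∈ Finset.Ico 2 k, iterlog j q) *
          iterlog k q ^ (1 + ε)))) :
    volume (WSet ψ γ) = 1 := by
  obtain ⟨ε, hε, k, hk, hdiv⟩ := hdiv
  exact stmt0_general γ ψ hψ0 hψdec fun hsum ↦
    hdiv (summable_div_iterlog_of_summable_div_sqrt_log1 hψ0 (by lia) hε.le hsum)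
end

section
/- Let {π_1, π_2, …, π_ℓ} be a partition of ℕ and let σ_1, σ_2, …, σ_ℓ ∈ ℝ. If ψ:ℕ→ℝ≥0 is decreasing and ∑_{q=1}^∞ ψ(q) = ∞, then there exists k ∈ {1, …, ℓ} such that meas(W(𝟙_{π_k}·ψ, σ_k)) = 1, where 𝟙_{π_k}·ψ denotes the function equal to ψ(q) for q ∈ π_k and 0 otherwise. -/
open MeasureTheory

/-!
Fix an interval `I`, and consider the shifted fractions `(p + σ) / q` in `I` whose denominators
`q` lie in a short window below `N`. If two of them are very close, then `(p - p') / (q - q')` is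
a fraction `a / k` of small denominator close to both; so after discarding all those near
fractions of small denominator, the remaining ones are `1 / (2 * N ^ 2)`-separated. A reduced
fraction `a / k` spoils only `O(H / k)` of them, where `H` is the length of the window, so if the
allowed denominators fill a positive proportion of the window, then `≫ |I| * N ^ 2` fractions
survive.

By the pigeonhole principle each window `N = M ^ n` is filled in a positive proportion by some
part of the partition, and by Cauchy condensation one part does so along a divergent portion of
the series `∑ M ^ n * ψ (M ^ n)`. Place balls of radius `min (ψ N / N) (1 / (4 * N ^ 2))` about
the survivors. Since their numbers grow geometrically, at least half of each generation avoids the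
previous ones until the union has measure `≫ |I|`, with an implied constant that does not depend
on `I`. Hence the limsup set has positive lower density at every point, and the Lebesgue density
theorem shows that it has full measure.
-/

open Filter Metric Topology
open scoped ENNReal Finset

section Series

theorem sum_range_pow_add_le {x : ℝ} (hx : 1 < x) (j n : ℕ) :
    ∑ m ∈ Finset.range n, x ^ (m + j) ≤ x ^ (n + j) / (x - 1) := by
  have hxj : 0 ≤ x ^ j := by positivity
  rw [le_div_iff₀ (sub_pos.2 hx)]
  calc (∑ m ∈ Finset.range n, x ^ (m + j)) * (x - 1)
      = (∑ m ∈ Finset.range n, x ^ m) * (x - 1) * x ^ j := by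
        simp only [pow_add, ← Finset.sum_mul]
        ring
    _ = x ^ (n + j) - x ^ j := by rw [geom_sum_mul, sub_mul, one_mul, pow_add]
    _ ≤ x ^ (n + j) := sub_le_self _ hxj

theorem summable_of_summable_min {a : ℕ → ℝ} (ha : ∀ n, 0 ≤ a n) {ε : ℝ} (hε : 0 < ε)
    (h : Summable fun n ↦ min (a n) ε) : Summable a := by
  refine Summable.of_norm_bounded_eventually_nat h ?_
  filter_upwards [h.tendsto_atTop_zero.eventually (gt_mem_nhds hε)] with n hn
  have han : a n < ε := (min_lt_iff.1 hn).resolve_right (lt_irrefl ε)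
  rw [Real.norm_of_nonneg (ha n), min_eq_left han.le]

theorem exists_not_summable_indicator_fiber {ι : Type*} [Finite ι] (f : ℕ → ι) {a : ℕ → ℝ}
    (ha : ¬ Summable a) : ∃ k, ¬ Summable ({n | f n = k}.indicator a) := by
  classical
  cases nonempty_fintype ι
  by_contra! hall
  refine ha ((summable_sum (s := Finset.univ) fun k _ ↦ hall k).congr fun n ↦ ?_)
  simp [Set.indicator_apply]

theorem summable_of_summable_pow_mul_apply_pow {M : ℕ} (hM : 2 ≤ M) {ψ : ℕ → ℝ}
    (hψ0 : ∀ q, 0 ≤ ψ q) (hψdec : ∀ q r, 1 ≤ q → q ≤ r → ψ r ≤ ψ q)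
    (h : Summable fun n ↦ ((M ^ n : ℕ) : ℝ) * ψ (M ^ n)) : Summable ψ := by
  rw [← summable_schlomilch_iff_of_nonneg (C := M) (u := fun n ↦ M ^ n) hψ0 hψdec
    (fun n ↦ by positivity) (pow_right_strictMono₀ (by lia)) (by lia)]
  · refine (h.mul_left ((M : ℝ) - 1)).congr fun n ↦ ?_
    push_cast
    ring
  · intro n
    rw [smul_eq_mul, Nat.mul_sub, ← pow_succ', ← pow_succ']

end Series

section Pigeonhole

theorem exists_card_le_card_mul_card_filter {α ι : Type*} [Fintype ι] [Nonempty ι]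
    {s : Finset α} {t : ι → Set α} [∀ k, DecidablePred (· ∈ t k)]
    (hcover : ∀ a ∈ s, ∃ k, a ∈ t k) :
    ∃ k, #s ≤ Fintype.card ι * #{a ∈ s | a ∈ t k} := by
  classical
  have hsum : #s ≤ ∑ k, #{a ∈ s | a ∈ t k} := by
    refine (Finset.card_le_card fun a ha ↦ ?_).trans Finset.card_biUnion_le
    obtain ⟨k, hk⟩ := hcover a ha
    exact Finset.mem_biUnion.2 ⟨k, Finset.mem_univ k, Finset.mem_filter.2 ⟨ha, hk⟩⟩
  have hsum' : ∑ _k : ι, #s ≤ ∑ k, Fintype.card ι * #{a ∈ s | a ∈ t k} := by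
    rw [Finset.sum_const, Finset.card_univ, smul_eq_mul, ← Finset.mul_sum]
    gcongr
  obtain ⟨k, -, hk⟩ := Finset.exists_le_of_sum_le Finset.univ_nonempty hsum'
  exact ⟨k, hk⟩

end Pigeonhole

section Separation

theorem sub_sub_one_le_card_Icc_ceil_floor (a b : ℝ) :
    b - a - 1 ≤ #(Finset.Icc ⌈a⌉ ⌊b⌋) := by
  have hcard : ((⌊b⌋ + 1 - ⌈a⌉ : ℤ) : ℝ) ≤ #(Finset.Icc ⌈a⌉ ⌊b⌋) := by
    rw [Int.card_Icc]
    exact_mod_cast Int.self_le_toNat _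
  push_cast at hcard
  linarith [Int.lt_floor_add_one b, Int.ceil_lt_add_one a]

theorem card_Icc_ceil_floor_le {a b : ℝ} (hab : a ≤ b + 1) :
    (#(Finset.Icc ⌈a⌉ ⌊b⌋) : ℝ) ≤ b - a + 1 := by
  have hcard : (#(Finset.Icc ⌈a⌉ ⌊b⌋) : ℝ) = max ((⌊b⌋ : ℝ) + 1 - ⌈a⌉) 0 := by
    rw [Int.card_Icc, ← Int.cast_natCast, Int.toNat_eq_max]
    push_cast
    rfl
  rw [hcard]
  exact max_le (by linarith [Int.floor_le b, Int.le_ceil a]) (by linarith)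

theorem card_le_of_pairwise_le_dist {ι : Type*} {P : Finset ι} {x : ι → ℝ} {δ a b : ℝ}
    (hδ : 0 < δ) (hab : a ≤ b) (hx : ∀ i ∈ P, x i ∈ Set.Icc a b)
    (hsep : (P : Set ι).Pairwise fun i j ↦ δ ≤ dist (x i) (x j)) :
    (#P : ℝ) ≤ (b - a) / δ + 1 := by
  have hinj : Set.InjOn (fun i ↦ ⌊(x i - a) / δ⌋) P := by
    intro i hi j hj hij
    by_contra hne
    have hlt : |(x i - a) / δ - (x j - a) / δ| < 1 := Int.abs_sub_lt_one_of_floor_eq_floor hij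
    rw [← sub_div, sub_sub_sub_cancel_right, abs_div, abs_of_pos hδ, div_lt_one hδ] at hlt
    exact (hsep hi hj hne).not_gt hlt
  have hmaps : Set.MapsTo (fun i ↦ ⌊(x i - a) / δ⌋) P
      (Finset.Icc ⌈(0 : ℝ)⌉ ⌊(b - a) / δ⌋) := by
    intro i hi
    obtain ⟨hai, hib⟩ := hx i hi
    rw [Finset.coe_Icc, Int.ceil_zero]
    exact ⟨Int.floor_nonneg.2 (div_nonneg (sub_nonneg.2 hai) hδ.le),
      Int.floor_le_floor (by gcongr)⟩
  have hba : 0 ≤ (b - a) / δ := div_nonneg (sub_nonneg.2 hab) hδ.le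
  calc (#P : ℝ) ≤ #(Finset.Icc ⌈(0 : ℝ)⌉ ⌊(b - a) / δ⌋) :=
        mod_cast Finset.card_le_card_of_injOn _ hmaps hinj
    _ ≤ (b - a) / δ - 0 + 1 := card_Icc_ceil_floor_le (by linarith)
    _ = (b - a) / δ + 1 := by rw [sub_zero]

end Separation

section Covering

variable {ι κ : Type*}

open scoped Classical in
theorem card_filter_not_disjoint_ball_le {S : Finset ι} {x : ι → ℝ} {δ r : ℝ} (hδ : 0 < δ)
    (hr0 : 0 ≤ r) (hr : 2 * r ≤ δ) (hsep : (S : Set ι).Pairwise fun i j ↦ δ ≤ dist (x i) (x j))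
    (T : Finset κ) (y : κ → ℝ) {ρ : κ → ℝ} (hρ : ∀ j ∈ T, 0 ≤ ρ j) :
    (#{i ∈ S | ¬ Disjoint (⋃ j ∈ T, ball (y j) (ρ j)) (ball (x i) r)} : ℝ) ≤
      ∑ j ∈ T, (2 * ρ j / δ + 2) := by
  let near : κ → Finset ι := fun j ↦ {i ∈ S | dist (x i) (y j) ≤ ρ j + r}
  have hsub : {i ∈ S | ¬ Disjoint (⋃ j ∈ T, ball (y j) (ρ j)) (ball (x i) r)} ⊆
      T.biUnion near := by
    intro i hi
    obtain ⟨hiS, z, hzT, hzi⟩ := by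
      simpa only [Finset.mem_filter, Set.not_disjoint_iff] using hi
    obtain ⟨j, hj, hzj⟩ := Set.mem_iUnion₂.1 hzT
    refine Finset.mem_biUnion.2 ⟨j, hj, Finset.mem_filter.2 ⟨hiS, ?_⟩⟩
    linarith [dist_triangle_left (x i) (y j) z, mem_ball.1 hzi, mem_ball.1 hzj]
  have hcard (j) (hj : j ∈ T) : (#(near j) : ℝ) ≤ 2 * ρ j / δ + 2 := by
    have hρj := hρ j hj
    have hcount : (#(near j) : ℝ) ≤ (y j + (ρ j + r) - (y j - (ρ j + r))) / δ + 1 := by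
      refine card_le_of_pairwise_le_dist hδ (by linarith) (fun i hi ↦ ?_)
        (hsep.mono (Finset.coe_subset.2 (Finset.filter_subset _ _)))
      rw [← Real.closedBall_eq_Icc]
      exact (Finset.mem_filter.1 hi).2
    have hr' : 2 * r / δ ≤ 1 := (div_le_one hδ).2 hr
    calc (#(near j) : ℝ) ≤ 2 * ρ j / δ + 2 * r / δ + 1 := by
          convert hcount using 2
          ring
      _ ≤ 2 * ρ j / δ + 2 := by linarith
  calc _ ≤ ((∑ j ∈ T, #(near j) : ℕ) : ℝ) :=
        mod_cast (Finset.card_le_card hsub).trans Finset.card_biUnion_le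
    _ ≤ _ := by
      push_cast
      exact Finset.sum_le_sum hcard

open scoped Classical in
theorem volume_add_ofReal_le_volume_union_ball {S : Finset ι} {x : ι → ℝ} {δ r : ℝ}
    (hr0 : 0 ≤ r) (hr : 2 * r ≤ δ) (hsep : (S : Set ι).Pairwise fun i j ↦ δ ≤ dist (x i) (x j))
    {F : Set ℝ} (hF : (#{i ∈ S | ¬ Disjoint F (ball (x i) r)} : ℝ) ≤ #S / 2) :
    volume F + ENNReal.ofReal (#S * r) ≤ volume (F ∪ ⋃ i ∈ S, ball (x i) r) := by
  let G : Finset ι := {i ∈ S | Disjoint F (ball (x i) r)}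
  have hGS : G ⊆ S := Finset.filter_subset _ _
  have hGcard : (#S : ℝ) / 2 ≤ #G := by
    have hsplit : (#G : ℝ) + #{i ∈ S | ¬ Disjoint F (ball (x i) r)} = #S :=
      mod_cast Finset.card_filter_add_card_filter_not _
    linarith
  have hdisj : (G : Set ι).PairwiseDisjoint fun i ↦ ball (x i) r := fun i hi j hj hij ↦
    ball_disjoint_ball (by linarith [hsep (hGS hi) (hGS hj) hij])
  have hmeas : MeasurableSet (⋃ i ∈ G, ball (x i) r) :=
    Finset.measurableSet_biUnion _ fun _ _ ↦ measurableSet_ball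
  have hFG : Disjoint F (⋃ i ∈ G, ball (x i) r) :=
    Set.disjoint_iUnion₂_right.2 fun i hi ↦ (Finset.mem_filter.1 hi).2
  have hvol : volume (⋃ i ∈ G, ball (x i) r) = ENNReal.ofReal (#G * (2 * r)) := by
    rw [measure_biUnion_finset hdisj fun _ _ ↦ measurableSet_ball]
    simp only [Real.volume_ball, Finset.sum_const, nsmul_eq_mul]
    rw [ENNReal.ofReal_mul (Nat.cast_nonneg _), ENNReal.ofReal_natCast]
  calc volume F + ENNReal.ofReal (#S * r)
      ≤ volume F + volume (⋃ i ∈ G, ball (x i) r) := by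
        have hle : #S * r ≤ #G * (2 * r) := by
          linarith [mul_le_mul_of_nonneg_right hGcard hr0]
        rw [hvol]
        gcongr
    _ = volume (F ∪ ⋃ i ∈ G, ball (x i) r) := (measure_union hFG hmeas).symm
    _ ≤ volume (F ∪ ⋃ i ∈ S, ball (x i) r) :=
        measure_mono (Set.union_subset_union_right _ (Set.biUnion_subset_biUnion_left hGS))

/-- While the total length of the first `n` generations is small, at most half of the balls of
generation `n` meet them: a ball of radius `ρ` meets `O(ρ / δ n + 1)` of these separated balls. -/
theorem volume_add_ofReal_le_of_sum_card_mul_le {S : ℕ → Finset ι} {x : ι → ℝ} {δ r : ℕ → ℝ}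
    {c : ℝ} {n : ℕ} (hδ : 0 < δ n) (hr0 : ∀ m, 0 ≤ r m) (hr : 2 * r n ≤ δ n)
    (hsep : (S n : Set ι).Pairwise fun i j ↦ δ n ≤ dist (x i) (x j))
    (hmany : 0 < r n → c ≤ δ n * #(S n))
    (hfew : 8 * δ n * ∑ m ∈ Finset.range n, (#(S m) : ℝ) ≤ c)
    (hsum : ∑ m ∈ Finset.range n, #(S m) * r m ≤ c / 8) :
    volume (⋃ m ∈ Finset.range n, ⋃ i ∈ S m, ball (x i) (r m)) + ENNReal.ofReal (#(S n) * r n) ≤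
      volume (⋃ m ∈ Finset.range (n + 1), ⋃ i ∈ S m, ball (x i) (r m)) := by
  classical
  set F : Set ℝ := ⋃ m ∈ Finset.range n, ⋃ i ∈ S m, ball (x i) (r m) with hF
  have hsucc : ⋃ m ∈ Finset.range (n + 1), ⋃ i ∈ S m, ball (x i) (r m) =
      F ∪ ⋃ i ∈ S n, ball (x i) (r n) := by
    rw [Finset.range_add_one, Finset.set_biUnion_insert, Set.union_comm]
  rw [hsucc]
  rcases (hr0 n).eq_or_lt with hrn | hrn
  · simp [← hrn]
  refine volume_add_ofReal_le_volume_union_ball (hr0 n) hr hsep ?_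
  have hFsigma : F = ⋃ p ∈ (Finset.range n).sigma S, ball (x p.2) (r p.1) := by
    ext α
    simp [hF, and_assoc]
  calc (#{i ∈ S n | ¬ Disjoint F (ball (x i) (r n))} : ℝ)
      ≤ ∑ p ∈ (Finset.range n).sigma S, (2 * r p.1 / δ n + 2) := by
        rw [hFsigma]
        exact card_filter_not_disjoint_ball_le hδ (hr0 n) hr hsep _ _ fun p _ ↦ hr0 p.1
    _ = (2 * (∑ m ∈ Finset.range n, #(S m) * r m) +
          2 * (δ n * ∑ m ∈ Finset.range n, (#(S m) : ℝ))) / δ n := by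
        rw [Finset.sum_sigma, eq_div_iff hδ.ne']
        simp only [Finset.sum_const, nsmul_eq_mul, Finset.mul_sum, Finset.sum_mul,
          ← Finset.sum_add_distrib]
        refine Finset.sum_congr rfl fun m _ ↦ ?_
        field_simp
    _ ≤ #(S n) / 2 := by
        rw [div_le_iff₀ hδ]
        linarith [hmany hrn]

theorem ofReal_le_volume_iUnion_ball_of_not_summable {S : ℕ → Finset ι} {x : ι → ℝ}
    {δ r : ℕ → ℝ} {c : ℝ} (hδ : ∀ n, 0 < δ n) (hr0 : ∀ n, 0 ≤ r n) (hr : ∀ n, 2 * r n ≤ δ n)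
    (hsep : ∀ n, (S n : Set ι).Pairwise fun i j ↦ δ n ≤ dist (x i) (x j))
    (hmany : ∀ n, 0 < r n → c ≤ δ n * #(S n))
    (hfew : ∀ n, 8 * δ n * ∑ m ∈ Finset.range n, (#(S m) : ℝ) ≤ c)
    (hdiv : ¬ Summable fun n ↦ #(S n) * r n) :
    ENNReal.ofReal (c / 8) ≤ volume (⋃ n, ⋃ i ∈ S n, ball (x i) (r n)) := by
  by_contra! hlt
  set F : ℕ → Set ℝ := fun n ↦ ⋃ m ∈ Finset.range n, ⋃ i ∈ S m, ball (x i) (r m)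
  have hterm (n) : 0 ≤ #(S n) * r n := mul_nonneg (Nat.cast_nonneg _) (hr0 n)
  have hsum_le (n) (hn : ENNReal.ofReal (∑ m ∈ Finset.range n, #(S m) * r m) ≤ volume (F n)) :
      ∑ m ∈ Finset.range n, #(S m) * r m ≤ c / 8 := by
    have hFn : F n ⊆ ⋃ n, ⋃ i ∈ S n, ball (x i) (r n) :=
      Set.iUnion₂_subset fun m _ ↦ Set.subset_iUnion (fun n ↦ ⋃ i ∈ S n, ball (x i) (r n)) m
    have hn' := hn.trans_lt ((measure_mono hFn).trans_lt hlt)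
    exact (ENNReal.ofReal_lt_ofReal_iff'.1 hn').1.le
  have hvol (n) : ENNReal.ofReal (∑ m ∈ Finset.range n, #(S m) * r m) ≤ volume (F n) := by
    induction n with
    | zero => simp
    | succ n ih =>
      rw [Finset.sum_range_succ,
        ENNReal.ofReal_add (Finset.sum_nonneg fun m _ ↦ hterm m) (hterm n)]
      exact (add_le_add_left ih _).trans <| volume_add_ofReal_le_of_sum_card_mul_le (hδ n) hr0
        (hr n) (hsep n) (hmany n) (hfew n) (hsum_le n ih)
  exact hdiv (summable_of_sum_range_le hterm fun n ↦ hsum_le n (hvol n))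

end Covering

section Density

theorem ae_mem_of_frequently_le_measure_inter_closedBall_div {β : Type*} [MetricSpace β]
    [MeasurableSpace β] [BorelSpace β] [SecondCountableTopology β] [HasBesicovitchCovering β]
    (μ : Measure β) [IsLocallyFiniteMeasure μ] {E : Set β} (hE : MeasurableSet E) {θ : ℝ≥0∞}
    (hθ : 0 < θ)
    (h : ∀ x, ∃ᶠ r in 𝓝[>] 0, θ ≤ μ (E ∩ closedBall x r) / μ (closedBall x r)) :
    ∀ᵐ x ∂μ, x ∈ E := by
  filter_upwards [Besicovitch.ae_tendsto_measure_inter_div_of_measurableSet μ hE] with x hx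
  by_contra hxE
  rw [Set.indicator_of_notMem hxE] at hx
  exact h x ((hx.eventually_lt_const hθ).mono fun r hr ↦ hr.not_ge)

end Density

section ShiftedFractions

/-- The shifted fraction `(p + σ) / q` encoded by `z = ⟨q, p⟩`; the points of inhomogeneous
approximation are those `α` close to such fractions. -/
noncomputable def shiftedFraction (σ : ℝ) (z : Σ _ : ℕ, ℤ) : ℝ := (z.2 + σ) / z.1

/-- The pairs `⟨q, p⟩` with `q ∈ Q` whose shifted fraction lies in `[u, v]`. Distinct pairs are
counted separately even if their fractions agree. -/
noncomputable def shiftedFractions (σ : ℝ) (Q : Finset ℕ) (u v : ℝ) : Finset (Σ _ : ℕ, ℤ) :=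
  Q.sigma fun q ↦ Finset.Icc ⌈q * u - σ⌉ ⌊q * v - σ⌋

/-- `x` is within `δ / k` of a fraction `a / k` with small denominator `k < H`. These are the points
around which shifted fractions cluster. -/
def NearSmallFraction (δ : ℝ) (H : ℕ) (x : ℝ) : Prop :=
  ∃ k ∈ Finset.Ico 1 H, ∃ a : ℤ, |k * x - a| < δ

variable {σ δ u v : ℝ} {Q : Finset ℕ} {H N : ℕ} {z w : Σ _ : ℕ, ℤ}

theorem natCast_mul_shiftedFraction (hz : 0 < z.1) : z.1 * shiftedFraction σ z = z.2 + σ :=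
  mul_div_cancel₀ _ (Nat.cast_ne_zero.2 hz.ne')

theorem distNearestInt_mul_sub_le (α : ℝ) (hz : 0 < z.1) :
    distNearestInt (z.1 * α - σ) ≤ z.1 * dist α (shiftedFraction σ z) := by
  calc distNearestInt (z.1 * α - σ) ≤ |z.1 * α - σ - z.2| := round_le _ _
    _ = |z.1 * (α - shiftedFraction σ z)| := by
      rw [mul_sub, natCast_mul_shiftedFraction hz]
      ring_nf
    _ = z.1 * dist α (shiftedFraction σ z) := by rw [abs_mul, Nat.abs_cast, Real.dist_eq]

theorem shiftedFraction_mem_Icc (hq : 0 < z.1) (hz : z ∈ shiftedFractions σ Q u v) :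
    shiftedFraction σ z ∈ Set.Icc u v := by
  have hq' : (0 : ℝ) < z.1 := mod_cast hq
  rw [shiftedFractions, Finset.mem_sigma, Finset.mem_Icc, Int.ceil_le, Int.le_floor] at hz
  rw [shiftedFraction, Set.mem_Icc, le_div_iff₀ hq', div_le_iff₀ hq']
  constructor <;> linarith [hz.2.1, hz.2.2]

theorem card_mul_le_card_shiftedFractions {m : ℝ} (hQ : ∀ q ∈ Q, m ≤ q) (huv : u ≤ v) :
    #Q * (m * (v - u) - 1) ≤ #(shiftedFractions σ Q u v) := by
  rw [shiftedFractions, Finset.card_sigma, Nat.cast_sum, ← nsmul_eq_mul, ← Finset.sum_const]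
  refine Finset.sum_le_sum fun q hq ↦ ?_
  have hmq : m * (v - u) ≤ q * (v - u) :=
    mul_le_mul_of_nonneg_right (hQ q hq) (sub_nonneg.2 huv)
  linarith [sub_sub_one_le_card_Icc_ceil_floor (q * u - σ) (q * v - σ)]

/-- If two shifted fractions are close, then `(p - p') / (q - q')` is a fraction of small
denominator close to both. -/
theorem div_le_dist_shiftedFraction_of_le (hδ : δ ≤ 1) (hz : 0 < z.1) (hzw : z.1 ≤ w.1)
    (hwH : w.1 < z.1 + H) (hwN : w.1 ≤ N) (hne : z ≠ w)
    (hfar : ¬ NearSmallFraction δ H (shiftedFraction σ z)) :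
    δ / N ≤ dist (shiftedFraction σ z) (shiftedFraction σ w) := by
  have hw : 0 < w.1 := hz.trans_le hzw
  have hmul : ((w.1 : ℝ) - z.1) * shiftedFraction σ z - (w.2 - z.2) =
      w.1 * (shiftedFraction σ z - shiftedFraction σ w) := by
    rw [sub_mul, mul_sub, natCast_mul_shiftedFraction hz, natCast_mul_shiftedFraction hw]
    ring
  have hδle : δ ≤ w.1 * dist (shiftedFraction σ z) (shiftedFraction σ w) := by
    rw [Real.dist_eq, ← Nat.abs_cast w.1, ← abs_mul, ← hmul]
    rcases hzw.eq_or_lt with heq | hlt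
    · have hnum : w.2 - z.2 ≠ 0 := fun h ↦
        hne (Sigma.ext heq (heq_of_eq (sub_eq_zero.1 h).symm))
      rw [heq, sub_self (w.1 : ℝ), zero_mul, zero_sub, abs_neg]
      exact hδ.trans (mod_cast Int.one_le_abs hnum)
    · have hk : w.1 - z.1 ∈ Finset.Ico 1 H := Finset.mem_Ico.2 (by lia)
      by_contra! hclose
      refine hfar ⟨w.1 - z.1, hk, w.2 - z.2, ?_⟩
      rwa [Nat.cast_sub hzw, Int.cast_sub]
  rw [div_le_iff₀ (mod_cast hw.trans_le hwN), mul_comm]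
  exact hδle.trans (by gcongr)

theorem NearSmallFraction.exists_isCoprime {x : ℝ} (h : NearSmallFraction δ H x) :
    ∃ k ∈ Finset.Ico 1 H, ∃ a : ℤ, IsCoprime (k : ℤ) a ∧ |k * x - a| < δ := by
  obtain ⟨k, hk, a, hka⟩ := h
  rw [Finset.mem_Ico] at hk
  obtain ⟨g, k', a', hg, hcop, hk', rfl⟩ :=
    Int.exists_gcd_one' (Int.gcd_pos_of_ne_zero_left a (by lia : (k : ℤ) ≠ 0))
  have hk'pos : 0 < k' := pos_of_mul_pos_left (hk' ▸ by lia) (Int.natCast_nonneg g)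
  lift k' to ℕ using hk'pos.le
  obtain rfl : k = k' * g := mod_cast hk'
  have hle : k' ≤ k' * g := Nat.le_mul_of_pos_right _ hg
  refine ⟨k', Finset.mem_Ico.2 (by lia), a', Int.isCoprime_iff_gcd_eq_one.2 hcop, ?_⟩
  calc |k' * x - a'| ≤ g * |k' * x - a'| :=
        le_mul_of_one_le_left (abs_nonneg _) (mod_cast hg)
    _ = |((k' * g : ℕ) : ℝ) * x - ((a' * g : ℤ) : ℝ)| := by
        rw [← Nat.abs_cast g, ← abs_mul]
        push_cast
        ring_nf
    _ < δ := hka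

theorem NearSmallFraction.exists_mem_Icc_isCoprime {x : ℝ} (h : NearSmallFraction δ H x)
    (hδ : δ ≤ 1) (hx : x ∈ Set.Icc u v) :
    ∃ k ∈ Finset.Ico 1 H, ∃ a ∈ Finset.Icc ⌈k * u - 1⌉ ⌊k * v + 1⌋,
      IsCoprime (k : ℤ) a ∧ |k * x - a| < δ := by
  obtain ⟨k, hk, a, hcop, hka⟩ := h.exists_isCoprime
  have hka1 := abs_lt.1 (hka.trans_le hδ)
  have hku : k * u ≤ k * x := mul_le_mul_of_nonneg_left hx.1 (Nat.cast_nonneg k)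
  have hkv : k * x ≤ k * v := mul_le_mul_of_nonneg_left hx.2 (Nat.cast_nonneg k)
  exact ⟨k, hk, a, Finset.mem_Icc.2 ⟨Int.ceil_le.2 (by linarith), Int.le_floor.2 (by linarith)⟩,
    hcop, hka⟩

/-- Denominators of fractions close to the same `a / k` are congruent modulo `k`. -/
theorem natCast_le_dist_of_abs_sub_lt {k : ℕ} {a : ℤ} (hk : 0 < k) (hcop : IsCoprime (k : ℤ) a)
    (hz : 0 < z.1) (hw : 0 < w.1) (hzN : z.1 ≤ N) (hwN : w.1 ≤ N) (hne : z ≠ w)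
    (hza : |k * shiftedFraction σ z - a| < 1 / (2 * N))
    (hwa : |k * shiftedFraction σ w - a| < 1 / (2 * N)) :
    (k : ℝ) ≤ dist (z.1 : ℝ) w.1 := by
  have hhalf {y : Σ _ : ℕ, ℤ} (hy : 0 < y.1) (hyN : y.1 ≤ N)
      (hya : |k * shiftedFraction σ y - a| < 1 / (2 * N)) :
      |k * (y.2 + σ) - y.1 * a| < 1 / 2 := by
    have hN : (0 : ℝ) < N := mod_cast hy.trans_le hyN
    calc |k * (y.2 + σ) - y.1 * a| = y.1 * |k * shiftedFraction σ y - a| := by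
          rw [← natCast_mul_shiftedFraction hy, ← Nat.abs_cast y.1, ← abs_mul, Nat.abs_cast]
          ring_nf
      _ ≤ N * |k * shiftedFraction σ y - a| := by gcongr
      _ < N * (1 / (2 * N)) := by gcongr
      _ = 1 / 2 := by field_simp
  have hdet : (k : ℤ) * (z.2 - w.2) = (z.1 - w.1) * a := by
    have hlt : |(k : ℝ) * (z.2 - w.2) - (z.1 - w.1) * a| < 1 := by
      have hz' := abs_lt.1 (hhalf hz hzN hza)
      have hw' := abs_lt.1 (hhalf hw hwN hwa)
      rw [abs_lt]
      constructor <;> linarith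
    exact sub_eq_zero.1 (Int.abs_lt_one_iff.1 (mod_cast hlt))
  have hdvd : (k : ℤ) ∣ z.1 - w.1 := hcop.dvd_of_dvd_mul_right ⟨_, hdet.symm⟩
  have hq : (z.1 : ℤ) - w.1 ≠ 0 := by
    intro hq
    rw [hq, zero_mul, mul_eq_zero, or_iff_right (by lia), sub_eq_zero] at hdet
    exact hne (Sigma.ext (by lia) (heq_of_eq hdet))
  have hle : (k : ℤ) ≤ |(z.1 : ℤ) - w.1| := Int.le_of_dvd (abs_pos.2 hq) ((dvd_abs _ _).2 hdvd)
  rw [Real.dist_eq]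
  exact mod_cast hle

theorem card_le_of_forall_abs_sub_lt {P : Finset (Σ _ : ℕ, ℤ)} {k : ℕ} {a : ℤ} (hk : 0 < k)
    (hkH : k ≤ H) (hHN : H ≤ N) (hcop : IsCoprime (k : ℤ) a)
    (hP : ∀ z ∈ P, z.1 ∈ Finset.Ioc (N - H) N)
    (hPa : ∀ z ∈ P, |k * shiftedFraction σ z - a| < 1 / (2 * N)) :
    (#P : ℝ) ≤ 2 * H / k := by
  have hk' : (0 : ℝ) < k := mod_cast hk
  have hrange (z) (hz : z ∈ P) : (z.1 : ℝ) ∈ Set.Icc ((N : ℝ) - H) N := by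
    obtain ⟨hlow, hup⟩ := Finset.mem_Ioc.1 (hP z hz)
    rw [← Nat.cast_sub hHN]
    exact ⟨mod_cast hlow.le, mod_cast hup⟩
  have hbound (z) (hz : z ∈ P) : 0 < z.1 ∧ z.1 ≤ N :=
    (Finset.mem_Ioc.1 (hP z hz)).imp_left (Nat.zero_le _).trans_lt
  have hcard : (#P : ℝ) ≤ (N - (N - H)) / k + 1 :=
    card_le_of_pairwise_le_dist hk' (sub_le_self _ (Nat.cast_nonneg _)) hrange
      fun z hz w hw hne ↦ natCast_le_dist_of_abs_sub_lt hk hcop (hbound z hz).1 (hbound w hw).1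
        (hbound z hz).2 (hbound w hw).2 hne (hPa z hz) (hPa w hw)
  have hone : (1 : ℝ) ≤ H / k := (one_le_div hk').2 (mod_cast hkH)
  calc (#P : ℝ) ≤ H / k + 1 := by rwa [sub_sub_cancel] at hcard
    _ ≤ H / k + H / k := by gcongr
    _ = 2 * H / k := by ring

open scoped Classical in
theorem card_filter_nearSmallFraction_le (hHN : H ≤ N) (huv : u ≤ v)
    (hQ : Q ⊆ Finset.Ioc (N - H) N) :
    (#{z ∈ shiftedFractions σ Q u v |
        NearSmallFraction (1 / (2 * N)) H (shiftedFraction σ z)} : ℝ) ≤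
      ∑ k ∈ Finset.Ico 1 H, (k * (v - u) + 3) * (2 * H / k) := by
  set I : ℕ → Finset ℤ := fun k ↦ Finset.Icc ⌈k * u - 1⌉ ⌊k * v + 1⌋
  set near : (Σ _ : ℕ, ℤ) → Finset (Σ _ : ℕ, ℤ) := fun y ↦
    {z ∈ shiftedFractions σ Q u v | IsCoprime (y.1 : ℤ) y.2 ∧
      |y.1 * shiftedFraction σ z - y.2| < 1 / (2 * N)}
  have hwindow {z} (hz : z ∈ shiftedFractions σ Q u v) : z.1 ∈ Finset.Ioc (N - H) N :=
    hQ (Finset.mem_sigma.1 hz).1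
  have hsub : {z ∈ shiftedFractions σ Q u v |
      NearSmallFraction (1 / (2 * N)) H (shiftedFraction σ z)} ⊆
      ((Finset.Ico 1 H).sigma I).biUnion near := by
    intro z hz
    obtain ⟨hz, hznear⟩ := Finset.mem_filter.1 hz
    have hq := Finset.mem_Ioc.1 (hwindow hz)
    have hN : (1 : ℝ) ≤ N := mod_cast (by lia : 1 ≤ N)
    obtain ⟨k, hk, a, ha, hka⟩ := hznear.exists_mem_Icc_isCoprime
      ((div_le_one (by linarith)).2 (by linarith)) (shiftedFraction_mem_Icc (by lia) hz)
    exact Finset.mem_biUnion.2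
      ⟨⟨k, a⟩, Finset.mem_sigma.2 ⟨hk, ha⟩, Finset.mem_filter.2 ⟨hz, hka⟩⟩
  have hnear (k) (hk : k ∈ Finset.Ico 1 H) (a : ℤ) : (#(near ⟨k, a⟩) : ℝ) ≤ 2 * H / k := by
    obtain ⟨hk1, hkH⟩ := Finset.mem_Ico.1 hk
    by_cases hcop : IsCoprime (k : ℤ) a
    · exact card_le_of_forall_abs_sub_lt hk1 hkH.le hHN hcop
        (fun z hz ↦ hwindow (Finset.mem_filter.1 hz).1) fun z hz ↦ (Finset.mem_filter.1 hz).2.2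
    · have hempty : near ⟨k, a⟩ = ∅ := Finset.filter_false_of_mem fun z _ hz ↦ hcop hz.1
      rw [hempty, Finset.card_empty, Nat.cast_zero]
      positivity
  have hI (k : ℕ) : (#(I k) : ℝ) ≤ k * (v - u) + 3 := by
    have hkuv : (k : ℝ) * u ≤ k * v := by gcongr
    calc (#(I k) : ℝ) ≤ k * v + 1 - (k * u - 1) + 1 := card_Icc_ceil_floor_le (by linarith)
      _ = k * (v - u) + 3 := by ring
  calc _ ≤ ∑ y ∈ (Finset.Ico 1 H).sigma I, (#(near y) : ℝ) :=
        mod_cast (Finset.card_le_card hsub).trans Finset.card_biUnion_le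
    _ = ∑ k ∈ Finset.Ico 1 H, ∑ a ∈ I k, (#(near ⟨k, a⟩) : ℝ) := Finset.sum_sigma _ _ _
    _ ≤ ∑ k ∈ Finset.Ico 1 H, #(I k) * (2 * H / k : ℝ) := by
        refine Finset.sum_le_sum fun k hk ↦ ?_
        rw [← nsmul_eq_mul]
        exact Finset.sum_le_card_nsmul _ _ _ fun a _ ↦ hnear k hk a
    _ ≤ _ := by
        gcongr with k
        exact hI k

theorem sum_Ico_mul_two_mul_div_le {L : ℝ} (hL : 0 ≤ L) (hHN : H ≤ N) :
    ∑ k ∈ Finset.Ico 1 H, (k * L + 3) * (2 * H / k) ≤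
      2 * (H : ℝ) ^ 2 * L + 6 * H * (1 + Real.log N) := by
  have hharmonic : ∑ k ∈ Finset.Ico 1 H, (k : ℝ)⁻¹ ≤ 1 + Real.log N := by
    calc ∑ k ∈ Finset.Ico 1 H, (k : ℝ)⁻¹ ≤ ∑ k ∈ Finset.Icc 1 N, (k : ℝ)⁻¹ :=
          Finset.sum_le_sum_of_subset_of_nonneg
            (fun k hk ↦ by rw [Finset.mem_Ico] at hk; exact Finset.mem_Icc.2 (by lia))
            fun k _ _ ↦ by positivity
      _ = (harmonic N : ℝ) := by simp [harmonic_eq_sum_Icc]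
      _ ≤ 1 + Real.log N := harmonic_le_one_add_log N
  have hcard : (#(Finset.Ico 1 H) : ℝ) ≤ H := by
    rw [Nat.card_Ico]
    exact mod_cast Nat.sub_le H 1
  calc ∑ k ∈ Finset.Ico 1 H, (k * L + 3) * (2 * H / k)
      = ∑ k ∈ Finset.Ico 1 H, (2 * H * L + 6 * H * (k : ℝ)⁻¹) := by
        refine Finset.sum_congr rfl fun k hk ↦ ?_
        have hk0 : (k : ℝ) ≠ 0 := by
          rw [Finset.mem_Ico] at hk
          exact Nat.cast_ne_zero.2 (by lia)
        field_simp
        ring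
    _ = #(Finset.Ico 1 H) * (2 * H * L) + 6 * H * ∑ k ∈ Finset.Ico 1 H, (k : ℝ)⁻¹ := by
        rw [Finset.sum_add_distrib, Finset.sum_const, nsmul_eq_mul, Finset.mul_sum]
    _ ≤ H * (2 * H * L) + 6 * H * (1 + Real.log N) := by gcongr
    _ = 2 * (H : ℝ) ^ 2 * L + 6 * H * (1 + Real.log N) := by ring

end ShiftedFractions

section SeparatedFractions

/-- The window of denominators in which fractions are collected. Its length `N / (16 * K)` is short
enough for a proportion `1 / K` of the window to outweigh the fractions lost to clustering. -/
def denominatorWindow (K N : ℕ) : Finset ℕ := Finset.Ioc (N - N / (16 * K)) N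

open scoped Classical in
/-- The pairs `⟨q, p⟩` with `q ∈ A` in the window at `N` whose shifted fraction lies in `[u, v]` and
away from the fractions of small denominator. Any two of these are at least `1 / (2 * N ^ 2)`
apart. -/
noncomputable def separatedFractions (σ : ℝ) (A : Set ℕ) (K N : ℕ) (u v : ℝ) :
    Finset (Σ _ : ℕ, ℤ) :=
  {z ∈ shiftedFractions σ {q ∈ denominatorWindow K N | q ∈ A} u v |
    ¬ NearSmallFraction (1 / (2 * N)) (N / (16 * K)) (shiftedFraction σ z)}

variable {σ u v : ℝ} {A : Set ℕ} {K N q : ℕ} {z : Σ _ : ℕ, ℤ}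

theorem card_denominatorWindow : #(denominatorWindow K N) = N / (16 * K) := by
  rw [denominatorWindow, Nat.card_Ioc, Nat.sub_sub_self (Nat.div_le_self _ _)]

theorem pos_of_mem_denominatorWindow (hq : q ∈ denominatorWindow K N) : 0 < q :=
  (Nat.zero_le _).trans_lt (Finset.mem_Ioc.1 hq).1

theorem le_of_mem_denominatorWindow (hq : q ∈ denominatorWindow K N) : q ≤ N :=
  (Finset.mem_Ioc.1 hq).2

theorem le_two_mul_of_mem_denominatorWindow (hq : q ∈ denominatorWindow K N) : N ≤ 2 * q := by
  have hlength : N / (16 * K) ≤ N / 16 := by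
    rw [← Nat.div_div_eq_div_mul]
    exact Nat.div_le_self _ _
  have hlow := (Finset.mem_Ioc.1 hq).1
  lia

theorem mem_separatedFractions :
    z ∈ separatedFractions σ A K N u v ↔
      z ∈ shiftedFractions σ (denominatorWindow K N) u v ∧ z.1 ∈ A ∧
        ¬ NearSmallFraction (1 / (2 * N)) (N / (16 * K)) (shiftedFraction σ z) := by
  simp only [separatedFractions, shiftedFractions, Finset.mem_filter, Finset.mem_sigma]
  tauto

theorem fst_mem_denominatorWindow (hz : z ∈ separatedFractions σ A K N u v) :
    z.1 ∈ denominatorWindow K N :=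
  (Finset.mem_sigma.1 (mem_separatedFractions.1 hz).1).1

theorem shiftedFraction_mem_Icc_of_mem_separatedFractions
    (hz : z ∈ separatedFractions σ A K N u v) : shiftedFraction σ z ∈ Set.Icc u v :=
  shiftedFraction_mem_Icc (pos_of_mem_denominatorWindow (fst_mem_denominatorWindow hz))
    (mem_separatedFractions.1 hz).1

theorem pairwise_separatedFractions :
    (separatedFractions σ A K N u v : Set (Σ _ : ℕ, ℤ)).Pairwise fun z w ↦
      1 / (2 * N ^ 2 : ℝ) ≤ dist (shiftedFraction σ z) (shiftedFraction σ w) := by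
  intro z hz w hw hne
  wlog hzw : z.1 ≤ w.1 generalizing z w
  · rw [dist_comm]
    exact this hw hz hne.symm (le_of_not_ge hzw)
  have hzwin := fst_mem_denominatorWindow hz
  have hwN := le_of_mem_denominatorWindow (fst_mem_denominatorWindow hw)
  have hz0 := pos_of_mem_denominatorWindow hzwin
  have hN : (1 : ℝ) ≤ N := mod_cast hz0.trans_le (hzw.trans hwN)
  have hδ : 1 / (2 * N : ℝ) ≤ 1 := (div_le_one (by linarith)).2 (by linarith)
  have hwH : w.1 < z.1 + N / (16 * K) := by
    have hlow := (Finset.mem_Ioc.1 hzwin).1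
    lia
  have h := div_le_dist_shiftedFraction_of_le hδ hz0 hzw hwH hwN hne
    (mem_separatedFractions.1 hz).2.2
  rwa [div_div, mul_assoc, ← sq] at h

theorem card_separatedFractions_le (hN : 0 < N) (huv : u ≤ v) :
    (#(separatedFractions σ A K N u v) : ℝ) ≤ 2 * N ^ 2 * (v - u) + 1 := by
  have h := card_le_of_pairwise_le_dist (by positivity) huv
    (fun z hz ↦ shiftedFraction_mem_Icc_of_mem_separatedFractions hz)
    (pairwise_separatedFractions (σ := σ) (A := A) (K := K) (N := N))
  rwa [div_div_eq_mul_div, div_one, mul_comm] at h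

open scoped Classical in
theorem le_card_separatedFractions (huv : u ≤ v) :
    #{q ∈ denominatorWindow K N | q ∈ A} * (N / 2 * (v - u) - 1) -
        (2 * ((N / (16 * K) : ℕ) : ℝ) ^ 2 * (v - u) +
          6 * (N / (16 * K) : ℕ) * (1 + Real.log N)) ≤
      #(separatedFractions σ A K N u v) := by
  set Q : Finset ℕ := {q ∈ denominatorWindow K N | q ∈ A} with hQdef
  have hQ : Q ⊆ denominatorWindow K N := Finset.filter_subset _ _
  have hHN : N / (16 * K) ≤ N := Nat.div_le_self _ _
  have hsplit : (#{z ∈ shiftedFractions σ Q u v |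
        NearSmallFraction (1 / (2 * N)) (N / (16 * K)) (shiftedFraction σ z)} : ℝ) +
      #(separatedFractions σ A K N u v) = #(shiftedFractions σ Q u v) := by
    rw [separatedFractions, ← hQdef]
    exact_mod_cast Finset.card_filter_add_card_filter_not _
  have hall : #Q * (N / 2 * (v - u) - 1) ≤ (#(shiftedFractions σ Q u v) : ℝ) := by
    refine card_mul_le_card_shiftedFractions (fun q hq ↦ ?_) huv
    have hNq : (N : ℝ) ≤ 2 * q := mod_cast le_two_mul_of_mem_denominatorWindow (hQ hq)
    linarith
  linarith [card_filter_nearSmallFraction_le (σ := σ) hHN huv hQ,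
    sum_Ico_mul_two_mul_div_le (sub_nonneg.2 huv) hHN]

theorem eventually_add_mul_log_le_mul (a b : ℝ) {c : ℝ} (hc : 0 < c) :
    ∀ᶠ N : ℕ in atTop, a + b * Real.log N ≤ c * N := by
  have hlittle : (fun x : ℝ ↦ a + b * Real.log x) =o[atTop] fun x ↦ x :=
    (Asymptotics.isLittleO_const_id_atTop a).add (Real.isLittleO_log_id_atTop.const_mul_left b)
  filter_upwards [tendsto_natCast_atTop_atTop.eventually (hlittle.bound hc)] with N hN
  rw [Real.norm_of_nonneg (Nat.cast_nonneg N)] at hN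
  exact (le_abs_self _).trans hN

open scoped Classical in
theorem mul_sq_mul_le_card_separatedFractions {h : ℕ} (hK : 0 < K) (huv : u ≤ v)
    (hdense : h ≤ K * #{q ∈ denominatorWindow K (16 * K * h) | q ∈ A})
    (hlog : 7 + 6 * Real.log (16 * K * h : ℕ) ≤ 2 * (h * (v - u))) :
    4 * h ^ 2 * (v - u) ≤ #(separatedFractions σ A K (16 * K * h) u v) := by
  have hlower := le_card_separatedFractions (σ := σ) (A := A) (K := K) (N := 16 * K * h) huv
  rw [Nat.mul_div_cancel_left h (by lia)] at hlower
  set Q : Finset ℕ := {q ∈ denominatorWindow K (16 * K * h) | q ∈ A}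
  have hK1 : (1 : ℝ) ≤ K := mod_cast hK
  have hcount : (h : ℝ) ≤ K * #Q := mod_cast hdense
  have hlog0 : 0 ≤ Real.log (16 * K * h : ℕ) := Real.log_natCast_nonneg _
  have hN : K * (8 * (h * (v - u))) = ((16 * K * h : ℕ) : ℝ) / 2 * (v - u) := by
    push_cast
    ring
  have hmain : h * (8 * (h * (v - u)) - 1) ≤
      #Q * (((16 * K * h : ℕ) : ℝ) / 2 * (v - u) - 1) := by
    calc h * (8 * (h * (v - u)) - 1)
        ≤ K * #Q * (8 * (h * (v - u)) - 1) := by gcongr; linarith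
      _ = #Q * (K * (8 * (h * (v - u))) - K) := by ring
      _ ≤ #Q * (((16 * K * h : ℕ) : ℝ) / 2 * (v - u) - 1) := by
        rw [hN]
        gcongr
  linarith [mul_le_mul_of_nonneg_left hlog (Nat.cast_nonneg h)]

open scoped Classical in
theorem eventually_mul_le_card_separatedFractions (σ : ℝ) (A : Set ℕ) (hK : 0 < K) (huv : u < v) :
    ∀ᶠ N : ℕ in atTop, 16 * K ∣ N →
      #(denominatorWindow K N) ≤ K * #{q ∈ denominatorWindow K N | q ∈ A} →
      (v - u) / (64 * K ^ 2) * N ^ 2 ≤ #(separatedFractions σ A K N u v) := by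
  have hK0 : (0 : ℝ) < K := mod_cast hK
  have hrate : 0 < (v - u) / (8 * K) := div_pos (sub_pos.2 huv) (mul_pos (by norm_num) hK0)
  filter_upwards [eventually_add_mul_log_le_mul 7 6 hrate] with N hlog hdvd hdense
  obtain ⟨h, rfl⟩ := hdvd
  rw [card_denominatorWindow, Nat.mul_div_cancel_left h (by lia)] at hdense
  have hlog' : 7 + 6 * Real.log (16 * K * h : ℕ) ≤ 2 * (h * (v - u)) := by
    convert hlog using 1
    push_cast
    field_simp
    ring
  convert mul_sq_mul_le_card_separatedFractions hK huv.le hdense hlog' using 1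
  push_cast
  field_simp
  ring

end SeparatedFractions

section LocalBound

variable {σ u v : ℝ} {A : Set ℕ} {K : ℕ}

theorem ball_shiftedFraction_subset {ψ : ℕ → ℝ} (hψdec : ∀ q r, 1 ≤ q → q ≤ r → ψ r ≤ ψ q)
    {N j : ℕ} (hj : 2 * j < N) {ρ : ℝ} (hρ : N * ρ ≤ ψ N) {z : Σ _ : ℕ, ℤ}
    (hz : z ∈ separatedFractions σ A K N u v) :
    ball (shiftedFraction σ z) ρ ⊆
      {α | ∃ q > j, distNearestInt (q * α - σ) < A.indicator ψ q} := by
  intro α hα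
  have hwin := fst_mem_denominatorWindow hz
  have hz0 := pos_of_mem_denominatorWindow hwin
  have hzN := le_of_mem_denominatorWindow hwin
  have hNz := le_two_mul_of_mem_denominatorWindow hwin
  have hρ0 : 0 ≤ ρ := dist_nonneg.trans (mem_ball.1 hα).le
  refine ⟨z.1, by lia, ?_⟩
  rw [Set.indicator_of_mem (mem_separatedFractions.1 hz).2.1]
  calc distNearestInt (z.1 * α - σ) ≤ z.1 * dist α (shiftedFraction σ z) :=
        distNearestInt_mul_sub_le α hz0
    _ < z.1 * ρ := by gcongr; exact mem_ball.1 hα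
    _ ≤ N * ρ := by gcongr
    _ ≤ ψ N := hρ
    _ ≤ ψ z.1 := hψdec _ _ hz0 hzN

theorem sum_card_separatedFractions_le (hK : 0 < K) (huv : u ≤ v) {n₀ : ℕ}
    (hlong : 1 ≤ (v - u) * ((64 * K : ℝ) ^ 2) ^ n₀) (n : ℕ) :
    ∑ m ∈ Finset.range n, (#(separatedFractions σ A K ((64 * K) ^ (m + n₀)) u v) : ℝ) ≤
      (v - u) / (1024 * K ^ 2) * ((64 * K : ℝ) ^ 2) ^ (n + n₀) := by
  have hK1 : (1 : ℝ) ≤ K ^ 2 := one_le_pow₀ (mod_cast hK)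
  have hM : 3072 * (K : ℝ) ^ 2 ≤ (64 * K : ℝ) ^ 2 - 1 := by
    rw [mul_pow]
    linarith
  have hterm (m : ℕ) : (#(separatedFractions σ A K ((64 * K) ^ (m + n₀)) u v) : ℝ) ≤
      3 * (v - u) * ((64 * K : ℝ) ^ 2) ^ (m + n₀) := by
    have hmono : ((64 * K : ℝ) ^ 2) ^ n₀ ≤ ((64 * K : ℝ) ^ 2) ^ (m + n₀) :=
      pow_le_pow_right₀ (by linarith) (Nat.le_add_left _ _)
    have hcard := card_separatedFractions_le (σ := σ) (A := A) (K := K)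
      (N := (64 * K) ^ (m + n₀)) (by positivity) huv
    push_cast at hcard
    rw [pow_right_comm] at hcard
    linarith [mul_le_mul_of_nonneg_left hmono (sub_nonneg.2 huv)]
  calc _ ≤ ∑ m ∈ Finset.range n, 3 * (v - u) * ((64 * K : ℝ) ^ 2) ^ (m + n₀) :=
        Finset.sum_le_sum fun m _ ↦ hterm m
    _ ≤ 3 * (v - u) * (((64 * K : ℝ) ^ 2) ^ (n + n₀) / ((64 * K : ℝ) ^ 2 - 1)) := by
        rw [← Finset.mul_sum]
        gcongr
        exact sum_range_pow_add_le (by linarith) n₀ n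
    _ ≤ 3 * (v - u) * (((64 * K : ℝ) ^ 2) ^ (n + n₀) / (3072 * K ^ 2)) := by
        gcongr
    _ = (v - u) / (1024 * K ^ 2) * ((64 * K : ℝ) ^ 2) ^ (n + n₀) := by
        field_simp
        ring

theorem ofReal_le_volume_iUnion_ball_separatedFractions (hK : 0 < K) (huv : u < v) {n₀ : ℕ}
    (hlong : 1 ≤ (v - u) * ((64 * K : ℝ) ^ 2) ^ n₀) {a : ℕ → ℝ} (ha0 : ∀ n, 0 ≤ a n)
    (ha : ∀ n, a n ≤ 1 / 4) (hdiv : ¬ Summable a)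
    (hmany : ∀ n, 0 < a n → (v - u) / (64 * K ^ 2) * ((64 * K : ℝ) ^ 2) ^ (n + n₀) ≤
      #(separatedFractions σ A K ((64 * K) ^ (n + n₀)) u v)) :
    ENNReal.ofReal ((v - u) / (1024 * K ^ 2)) ≤
      volume (⋃ n, ⋃ z ∈ separatedFractions σ A K ((64 * K) ^ (n + n₀)) u v,
        ball (shiftedFraction σ z) (a n / ((64 * K : ℝ) ^ 2) ^ (n + n₀))) := by
  have hK0 : (0 : ℝ) < K := mod_cast hK
  have hL : 0 < v - u := sub_pos.2 huv
  have hX (n : ℕ) : 0 < ((64 * K : ℝ) ^ 2) ^ n :=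
    pow_pos (pow_pos (mul_pos (by norm_num) hK0) 2) n
  have hconst : (v - u) / (1024 * K ^ 2) = (v - u) / (128 * K ^ 2) / 8 := by
    rw [div_div]
    ring
  rw [hconst]
  refine ofReal_le_volume_iUnion_ball_of_not_summable
    (δ := fun n ↦ 1 / (2 * ((64 * K : ℝ) ^ 2) ^ (n + n₀))) (fun n ↦ by positivity)
    (fun n ↦ div_nonneg (ha0 n) (hX _).le) (fun n ↦ ?_) (fun n ↦ ?_) (fun n hn ↦ ?_)
    (fun n ↦ ?_) (fun hsum ↦ hdiv ?_)
  · rw [← mul_div_assoc, ← div_div]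
    gcongr
    linarith [ha n]
  · have h := pairwise_separatedFractions (σ := σ) (A := A) (K := K) (N := (64 * K) ^ (n + n₀))
      (u := u) (v := v)
    push_cast at h
    rwa [pow_right_comm] at h
  · have h := hmany n ((div_pos_iff_of_pos_right (hX _)).1 hn)
    rw [one_div_mul_eq_div, le_div_iff₀ (by positivity)]
    refine (le_of_eq ?_).trans h
    field_simp
    norm_num
  · have h := sum_card_separatedFractions_le (σ := σ) (A := A) hK huv.le hlong n
    calc _ ≤ 8 * (1 / (2 * ((64 * K : ℝ) ^ 2) ^ (n + n₀))) *
          ((v - u) / (1024 * K ^ 2) * ((64 * K : ℝ) ^ 2) ^ (n + n₀)) := by gcongr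
      _ = (v - u) / (256 * K ^ 2) := by field_simp; norm_num
      _ ≤ (v - u) / (128 * K ^ 2) := by gcongr; norm_num
  · refine Summable.of_nonneg_of_le ha0 (fun n ↦ ?_) (hsum.mul_left (64 * K ^ 2 / (v - u)))
    rcases (ha0 n).eq_or_lt with hn | hn
    · simp [← hn]
    calc a n = 64 * K ^ 2 / (v - u) * ((v - u) / (64 * K ^ 2) * ((64 * K : ℝ) ^ 2) ^ (n + n₀) *
          (a n / ((64 * K : ℝ) ^ 2) ^ (n + n₀))) := by field_simp
      _ ≤ _ := by
        gcongr
        exact hmany n hn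

end LocalBound

section LimsupSet

theorem distNearestInt_eq_norm (x : ℝ) : distNearestInt x = ‖(x : UnitAddCircle)‖ :=
  UnitAddCircle.norm_eq.symm

theorem isOpen_setOf_exists_distNearestInt_lt (σ : ℝ) (φ : ℕ → ℝ) (j : ℕ) :
    IsOpen {α : ℝ | ∃ q > j, distNearestInt (q * α - σ) < φ q} := by
  simp only [Set.ofPred_exists, Set.ofPred_and, distNearestInt_eq_norm]
  refine isOpen_iUnion fun q ↦ isOpen_const.inter (isOpen_lt ?_ continuous_const)
  exact ((AddCircle.continuous_mk' 1).comp (by fun_prop)).norm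

variable {σ : ℝ} {A : Set ℕ} {K : ℕ} {ψ : ℕ → ℝ} {J : Set ℕ}

open scoped Classical in
theorem eventually_mul_pow_le_card_separatedFractions {u v : ℝ} (hK : 0 < K) (huv : u < v)
    (hJ : ∀ n ∈ J, #(denominatorWindow K ((64 * K) ^ n)) ≤
      K * #{q ∈ denominatorWindow K ((64 * K) ^ n) | q ∈ A}) :
    ∀ᶠ n : ℕ in atTop, n ∈ J → (v - u) / (64 * K ^ 2) * ((64 * K : ℝ) ^ 2) ^ n ≤
      #(separatedFractions σ A K ((64 * K) ^ n) u v) := by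
  have hpow : Tendsto (fun n ↦ (64 * K) ^ n) atTop atTop :=
    tendsto_pow_atTop_atTop_of_one_lt (by lia)
  filter_upwards [hpow.eventually (eventually_mul_le_card_separatedFractions σ A hK huv),
    eventually_ne_atTop 0] with n hcard hn hnJ
  have hdvd : 16 * K ∣ (64 * K) ^ n :=
    (mul_dvd_mul_right (by norm_num) K).trans (dvd_pow_self _ hn)
  have h := hcard hdvd (hJ n hnJ)
  push_cast at h
  rwa [pow_right_comm] at h

theorem ball_subset_setOf_inter_closedBall (hψdec : ∀ q r, 1 ≤ q → q ≤ r → ψ r ≤ ψ q)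
    {n j : ℕ} (hj : 2 * j < (64 * K) ^ n) {x r a : ℝ} (hr : 1 ≤ r * ((64 * K : ℝ) ^ 2) ^ n)
    (ha : a ≤ 1 / 4) (haψ : a ≤ ((64 * K) ^ n : ℕ) * ψ ((64 * K) ^ n)) {z : Σ _ : ℕ, ℤ}
    (hz : z ∈ separatedFractions σ A K ((64 * K) ^ n) (x - r / 2) (x + r / 2)) :
    ball (shiftedFraction σ z) (a / ((64 * K : ℝ) ^ 2) ^ n) ⊆
      {α | ∃ q > j, distNearestInt (q * α - σ) < A.indicator ψ q} ∩ closedBall x r := by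
  have hN : (0 : ℝ) < ((64 * K) ^ n : ℕ) := mod_cast (Nat.zero_le _).trans_lt hj
  have hsq : ((64 * K : ℝ) ^ 2) ^ n = (((64 * K) ^ n : ℕ) : ℝ) ^ 2 := by
    push_cast
    exact pow_right_comm _ _ _
  rw [hsq] at hr ⊢
  refine Set.subset_inter (ball_shiftedFraction_subset hψdec hj ?_ hz)
    (ball_subset_closedBall.trans (closedBall_subset_closedBall' ?_))
  · rw [mul_div_assoc', div_le_iff₀ (by positivity), sq, ← mul_assoc, mul_comm]
    gcongr
    linarith
  · have hcentre : dist (shiftedFraction σ z) x ≤ r / 2 := by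
      rw [← mem_closedBall, Real.closedBall_eq_Icc]
      exact shiftedFraction_mem_Icc_of_mem_separatedFractions hz
    have hradius : a / (((64 * K) ^ n : ℕ) : ℝ) ^ 2 ≤ r / 4 := by
      rw [div_le_iff₀ (by positivity)]
      linarith
    have hr0 : 0 < r := pos_of_mul_pos_left (one_pos.trans_le hr) (by positivity)
    linarith

open scoped Classical in
theorem ofReal_le_volume_setOf_inter_closedBall (hK : 0 < K) (hψ0 : ∀ q, 0 ≤ ψ q)
    (hψdec : ∀ q r, 1 ≤ q → q ≤ r → ψ r ≤ ψ q)
    (hJ : ∀ n ∈ J, #(denominatorWindow K ((64 * K) ^ n)) ≤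
      K * #{q ∈ denominatorWindow K ((64 * K) ^ n) | q ∈ A})
    (hdiv : ¬ Summable (J.indicator fun n ↦ (((64 * K) ^ n : ℕ) : ℝ) * ψ ((64 * K) ^ n)))
    (j : ℕ) (x : ℝ) {r : ℝ} (hr : 0 < r) :
    ENNReal.ofReal (r / (1024 * K ^ 2)) ≤
      volume ({α | ∃ q > j, distNearestInt (q * α - σ) < A.indicator ψ q} ∩ closedBall x r) := by
  have hK1 : (1 : ℝ) ≤ K := mod_cast hK
  have huv : x - r / 2 < x + r / 2 := by linarith
  have hlength : x + r / 2 - (x - r / 2) = r := by ring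
  have hpos (n : ℕ) : 0 ≤ (((64 * K) ^ n : ℕ) : ℝ) * ψ ((64 * K) ^ n) :=
    mul_nonneg (Nat.cast_nonneg _) (hψ0 _)
  set b : ℕ → ℝ := J.indicator fun n ↦ (((64 * K) ^ n : ℕ) : ℝ) * ψ ((64 * K) ^ n)
  have hlong : ∀ᶠ n : ℕ in atTop, 1 ≤ r * ((64 * K : ℝ) ^ 2) ^ n :=
    ((tendsto_pow_atTop_atTop_of_one_lt (by nlinarith)).const_mul_atTop hr).eventually_ge_atTop 1
  have hpast : ∀ᶠ n : ℕ in atTop, 2 * j < (64 * K) ^ n :=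
    (tendsto_pow_atTop_atTop_of_one_lt (by lia)).eventually_gt_atTop _
  obtain ⟨n₀, hn₀⟩ := eventually_atTop.1 <|
    (eventually_mul_pow_le_card_separatedFractions (σ := σ) hK huv hJ).and (hlong.and hpast)
  simp only [hlength] at hn₀
  have hvol := ofReal_le_volume_iUnion_ball_separatedFractions (σ := σ) (A := A) hK huv (n₀ := n₀)
    (a := fun n ↦ min (b (n + n₀)) (1 / 4)) (hlength.symm ▸ (hn₀ n₀ le_rfl).2.1)
    (fun n ↦ le_min (Set.indicator_nonneg (fun n _ ↦ hpos n) _) (by norm_num))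
    (fun n ↦ min_le_right _ _)
    (fun h ↦ hdiv <| (summable_nat_add_iff n₀).1 <| summable_of_summable_min
      (fun n ↦ Set.indicator_nonneg (fun n _ ↦ hpos n) _) (by norm_num) h)
    fun n hn ↦ hlength.symm ▸ (hn₀ (n + n₀) (Nat.le_add_left _ _)).1
      (Set.mem_of_indicator_ne_zero (lt_min_iff.1 hn).1.ne')
  rw [hlength] at hvol
  refine hvol.trans (measure_mono (Set.iUnion_subset fun n ↦ Set.iUnion₂_subset fun z hz ↦ ?_))
  obtain ⟨-, hrN, hjN⟩ := hn₀ (n + n₀) (Nat.le_add_left _ _)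
  exact ball_subset_setOf_inter_closedBall hψdec hjN hrN (min_le_right _ _)
    ((min_le_left _ _).trans (Set.indicator_le_self' (fun n _ ↦ hpos n) _)) hz

open scoped Classical in
theorem ae_infinite_setOf_distNearestInt_lt_indicator (hK : 0 < K) (hψ0 : ∀ q, 0 ≤ ψ q)
    (hψdec : ∀ q r, 1 ≤ q → q ≤ r → ψ r ≤ ψ q)
    (hJ : ∀ n ∈ J, #(denominatorWindow K ((64 * K) ^ n)) ≤
      K * #{q ∈ denominatorWindow K ((64 * K) ^ n) | q ∈ A})
    (hdiv : ¬ Summable (J.indicator fun n ↦ (((64 * K) ^ n : ℕ) : ℝ) * ψ ((64 * K) ^ n))) :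
    ∀ᵐ α : ℝ, {q : ℕ | 1 ≤ q ∧ distNearestInt (q * α - σ) < A.indicator ψ q}.Infinite := by
  have hθ : 0 < ENNReal.ofReal (1 / (2048 * K ^ 2)) := ENNReal.ofReal_pos.2 (by positivity)
  have hae (j : ℕ) :
      ∀ᵐ α : ℝ, α ∈ {α : ℝ | ∃ q > j, distNearestInt (q * α - σ) < A.indicator ψ q} := by
    refine ae_mem_of_frequently_le_measure_inter_closedBall_div volume
      (isOpen_setOf_exists_distNearestInt_lt σ _ j).measurableSet hθ fun x ↦
      (eventually_nhdsWithin_of_forall fun r hr ↦ ?_).frequently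
    rw [Set.mem_Ioi] at hr
    have hθr : ENNReal.ofReal (1 / (2048 * K ^ 2)) * ENNReal.ofReal (2 * r) =
        ENNReal.ofReal (r / (1024 * K ^ 2)) := by
      rw [← ENNReal.ofReal_mul (by positivity)]
      congr 1
      field_simp
      norm_num
    have h2r : ENNReal.ofReal (2 * r) ≠ 0 := (ENNReal.ofReal_pos.2 (by linarith)).ne'
    rw [Real.volume_closedBall, ENNReal.le_div_iff_mul_le (.inl h2r) (.inl ENNReal.ofReal_ne_top),
      hθr]
    exact ofReal_le_volume_setOf_inter_closedBall hK hψ0 hψdec hJ hdiv j x hr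
  filter_upwards [ae_all_iff.2 hae] with α hα
  refine Set.infinite_of_forall_exists_gt fun j ↦ ?_
  obtain ⟨q, hjq, hq⟩ := hα j
  exact ⟨q, ⟨by lia, hq⟩, hjq⟩

end LimsupSet

section Partition

theorem stmt2_general {ι : Type*} [Finite ι] (π : ι → Set ℕ) (σ : ι → ℝ)
    (hcover : ∀ q : ℕ, 1 ≤ q → ∃ k, q ∈ π k) (ψ : ℕ → ℝ) (hψ0 : ∀ q, 0 ≤ ψ q)
    (hψdec : ∀ q r : ℕ, 1 ≤ q → q ≤ r → ψ r ≤ ψ q) (hdiv : ¬ Summable ψ) :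
    ∃ k, ∀ᵐ α : ℝ,
      {q : ℕ | 1 ≤ q ∧ distNearestInt (q * α - σ k) < (π k).indicator ψ q}.Infinite := by
  classical
  cases nonempty_fintype ι
  have : Nonempty ι := (hcover 1 le_rfl).nonempty
  set K : ℕ := Fintype.card ι
  have hK : 0 < K := Fintype.card_pos
  choose f hf using fun n ↦ exists_card_le_card_mul_card_filter
    (s := denominatorWindow K ((64 * K) ^ n)) fun q hq ↦
      hcover q (pos_of_mem_denominatorWindow hq)
  have hcondensed : ¬ Summable fun n ↦ (((64 * K) ^ n : ℕ) : ℝ) * ψ ((64 * K) ^ n) :=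
    mt (summable_of_summable_pow_mul_apply_pow (by lia) hψ0 hψdec) hdiv
  obtain ⟨k, hk⟩ := exists_not_summable_indicator_fiber f hcondensed
  refine ⟨k, ae_infinite_setOf_distNearestInt_lt_indicator hK hψ0 hψdec ?_ hk⟩
  rintro n rfl
  exact hf n

theorem volume_WSet_eq_one_of_ae {ψ γ : ℕ → ℝ}
    (h : ∀ᵐ α : ℝ, {q : ℕ | 1 ≤ q ∧ distNearestInt (q * α - γ q) < ψ q}.Infinite) :
    volume (WSet ψ γ) = 1 := by
  have hW : WSet ψ γ =ᵐ[volume] Set.Icc (0 : ℝ) 1 :=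
    inter_ae_eq_left_of_ae_eq_univ (eventuallyEq_univ.2 h)
  rw [measure_congr hW, Real.volume_Icc, sub_zero, ENNReal.ofReal_one]

end Partition

theorem stmt2 (ℓ : ℕ) (π : Fin ℓ → Set ℕ) (σ : Fin ℓ → ℝ)
    (hpart : ∀ q : ℕ, 1 ≤ q → ∃! k, q ∈ π k)
    (ψ : ℕ → ℝ) (hψ0 : ∀ q, 0 ≤ ψ q)
    (hψdec : ∀ q r : ℕ, 1 ≤ q → q ≤ r → ψ r ≤ ψ q)
    (hdiv : ¬ Summable ψ) :
    ∃ k : Fin ℓ, volume (WSet ((π k).indicator ψ) (fun _ => σ k)) = 1 :=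
  (stmt2_general π σ (fun q hq ↦ (hpart q hq).exists) ψ hψ0 hψdec hdiv).imp
    fun _ ↦ volume_WSet_eq_one_of_ae
end
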